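/- arXiv:2105.13359 — 2 statements merged into one kernel-verified Lean document; each statement's English description precedes it below -/
import Mathlib

section
/- Value of the string order parameter in class AIII (Theorem 3, α = ω part). Let N_z, N_Z ≥ 0 be integers, z_1,…,z_{N_z} ∈ ℂ with |z_j| < 1, and Z_1,…,Z_{N_Z} ∈ ℂ with |Z_k| > 1 (no reality or conjugation constraint). Define the symbol t on the unit circle by t(z) = exp(W(z)) where W(z) = (1/2) Σ_{j=1}^{N_z} [ Log(1 − z_j/z) − Log(1 − conj(z_j)·z) ] + (1/2) Σ_{k=1}^{N_Z} [ Log(1 − z/Z_k) − Log(1 − 1/(conj(Z_k)·z)) ], with Log the principal branch of the logarithm. Then lim_{N→∞} |D_N[t]| exists and equals L^{1/4}, where L = ∏_{j1=1}^{N_z} ∏_{j2=1}^{N_z} (1 − z_{j1}·conj(z_{j2})) · ∏_{k1=1}^{N_Z} ∏_{k2=1}^{N_Z} (1 − (Z_{k1}·conj(Z_{k2}))^{-1}) / ∏_{j=1}^{N_z} ∏_{k=1}^{N_Z} |1 − z_j/Z_k|², a positive real number. (For the AIII chain with f(z) = e^{iθ} z^{-N_P} ∏_j (z−z_j) ∏_k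 (z−Z_k), the string order parameter lim_N ⟨Õ_ω(1)Õ_ω(N+1)⟩ equals lim_N |D_N[t]|² = L^{1/2}.) -/
open scoped BigOperators
open Filter

/-- The `k`-th Fourier coefficient of a symbol `t` on the unit circle. -/
noncomputable def symbolCoeff (t : ℂ → ℂ) (k : ℤ) : ℂ :=
  (1 / (2 * Real.pi)) *
    ∫ θ in (0:ℝ)..(2 * Real.pi),
      t (Complex.exp (Complex.I * (θ : ℂ))) * Complex.exp (-(Complex.I * (k : ℂ) * (θ : ℂ)))

/-- The `N × N` Toeplitz determinant `D_N[t]` generated by the symbol `t`. -/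
noncomputable def toeplitzDet (t : ℂ → ℂ) (N : ℕ) : ℂ :=
  Matrix.det (Matrix.of fun m n : Fin N => symbolCoeff t ((m : ℤ) - (n : ℤ)))

/-- The function `W(z)` built from principal-branch logarithms, so that `e^{W}` is the
(winding-number-removed) AIII symbol. -/
noncomputable def aiiiW (Nz NZ : ℕ) (z : Fin Nz → ℂ) (Z : Fin NZ → ℂ) (w : ℂ) : ℂ :=
  (1 / 2) * ∑ j, (Complex.log (1 - z j / w) - Complex.log (1 - (starRingEnd ℂ) (z j) * w)) +
  (1 / 2) * ∑ k, (Complex.log (1 - w / Z k) - Complex.log (1 - 1 / ((starRingEnd ℂ) (Z k) * w)))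

open Matrix ComplexOrder in
lemma norm_det_le_one_of_row_norm_le {n : Type*} [Fintype n] [DecidableEq n] (M : Matrix n n ℂ)
    (h : ∀ i, ∑ j, ‖M i j‖ ^ 2 ≤ 1) : ‖M.det‖ ≤ 1 := by
  have hP : (M * Mᴴ).PosSemidef := posSemidef_self_mul_conjTranspose M
  have hev := hP.eigenvalues_nonneg
  have hdet : ‖M.det‖ ^ 2 = ∏ i, hP.1.eigenvalues i := by
    have h1 := hP.1.det_eq_prod_eigenvalues
    rw [det_mul, det_conjTranspose] at h1
    have h2 : M.det * star M.det = ((‖M.det‖ ^ 2 : ℝ) : ℂ) := by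
      rw [Complex.star_def, Complex.mul_conj']; push_cast; rfl
    rw [h2] at h1
    have h3 : ((‖M.det‖ ^ 2 : ℝ) : ℂ) = ((∏ i, hP.1.eigenvalues i : ℝ) : ℂ) := by
      rw [h1]; push_cast; rfl
    exact_mod_cast h3
  have htr : ∑ i, hP.1.eigenvalues i ≤ Fintype.card n := by
    have h1 := hP.1.trace_eq_sum_eigenvalues
    have h2 : (M * Mᴴ).trace = ((∑ i, ∑ j, ‖M i j‖ ^ 2 : ℝ) : ℂ) := by
      push_cast
      simp only [trace, diag_apply, mul_apply, conjTranspose_apply, Complex.star_def,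
        Complex.mul_conj']
    rw [h2] at h1
    have h3 : (∑ i, ∑ j, ‖M i j‖ ^ 2 : ℝ) = ∑ i, hP.1.eigenvalues i := by
      have : ((∑ i, ∑ j, ‖M i j‖ ^ 2 : ℝ) : ℂ) = ((∑ i, hP.1.eigenvalues i : ℝ) : ℂ) := by
        rw [h1]; push_cast; rfl
      exact_mod_cast this
    rw [← h3]
    calc _ ≤ ∑ _i : n, (1 : ℝ) := Finset.sum_le_sum fun i _ => h i
      _ = _ := by simp
  have hprod : ∏ i, hP.1.eigenvalues i ≤ 1 := by
    calc ∏ i, hP.1.eigenvalues i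
        ≤ ∏ i, Real.exp (hP.1.eigenvalues i - 1) := by
          refine Finset.prod_le_prod (fun i _ => hev i) fun i _ => ?_
          have := Real.add_one_le_exp (hP.1.eigenvalues i - 1)
          linarith
      _ = Real.exp (∑ i, hP.1.eigenvalues i - Fintype.card n) := by
          rw [← Real.exp_sum]; simp
      _ ≤ 1 := Real.exp_le_one_iff.mpr (by linarith)
  rw [← hdet] at hprod
  exact (sq_le_one_iff₀ (norm_nonneg _)).mp hprod

lemma norm_adjugate_le_one_of_row_norm_le {n : Type*} [Fintype n] [DecidableEq n]
    (M : Matrix n n ℂ) (h : ∀ i, ∑ j, ‖M i j‖ ^ 2 ≤ 1) (i j : n) : ‖M.adjugate i j‖ ≤ 1 := by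
  rw [Matrix.adjugate_apply]
  refine norm_det_le_one_of_row_norm_le _ fun k => ?_
  by_cases hk : k = j
  · subst hk
    rw [Finset.sum_eq_single i] <;> simp +contextual
  · simpa [Matrix.updateRow_ne hk] using h k

lemma hasDerivAt_det {n : Type*} [Fintype n] [DecidableEq n] {M : ℝ → Matrix n n ℂ}
    {M' : Matrix n n ℂ} {x : ℝ} (h : ∀ i j, HasDerivAt (fun s => M s i j) (M' i j) x) :
    HasDerivAt (fun s => (M s).det) ((M x).adjugate * M').trace x := by
  have hd : HasDerivAt (fun s => (M s).det)
      (∑ σ : Equiv.Perm n, ((Equiv.Perm.sign σ : ℤ) : ℂ) *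
        ∑ i, (∏ j ∈ Finset.univ.erase i, M x (σ j) j) * M' (σ i) i) x := by
    simp only [Matrix.det_apply']
    refine HasDerivAt.fun_sum fun σ _ => HasDerivAt.const_mul _ ?_
    simpa [smul_eq_mul] using HasDerivAt.fun_finsetProd (u := Finset.univ)
      (f := fun j s => M s (σ j) j) (f' := fun j => M' (σ j) j) (x := x) fun j _ => h _ _
  convert hd using 1
  have hcol : ∀ i, ((M x).adjugate * M') i i = ((M x).updateCol i fun k => M' k i).det := by
    intro i
    rw [← Matrix.cramer_apply, Matrix.cramer_eq_adjugate_mulVec]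
    rfl
  simp only [Matrix.trace, Matrix.diag_apply, hcol, Matrix.det_apply', Finset.mul_sum]
  rw [Finset.sum_comm]
  refine Finset.sum_congr rfl fun σ _ => Finset.sum_congr rfl fun i _ => ?_
  congr 1
  rw [← Finset.prod_erase_mul _ _ (Finset.mem_univ i)]
  congr 1
  · refine Finset.prod_congr rfl fun j hj => ?_
    rw [Matrix.updateCol_ne (Finset.ne_of_mem_erase hj)]
  · simp

lemma continuous_circleParam {t : ℂ → ℂ} (ht : ContinuousOn t (Metric.sphere 0 1)) :
    Continuous fun θ : ℝ => t (Complex.exp (Complex.I * (θ : ℂ))) := by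
  refine ht.comp_continuous (by fun_prop) fun θ => ?_
  rw [mem_sphere_zero_iff_norm, mul_comm, Complex.norm_exp_ofReal_mul_I]

lemma norm_circleParam (θ : ℝ) : ‖Complex.exp (Complex.I * (θ : ℂ))‖ = 1 := by
  rw [mul_comm, Complex.norm_exp_ofReal_mul_I]

lemma norm_circleChar (k : ℤ) (θ : ℝ) :
    ‖Complex.exp (-(Complex.I * (k : ℂ) * (θ : ℂ)))‖ = 1 := by
  rw [Complex.norm_exp]; simp

lemma symbolCoeff_congr {t u : ℂ → ℂ} (h : ∀ z, ‖z‖ = 1 → t z = u z) (k : ℤ) :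
    symbolCoeff t k = symbolCoeff u k := by
  unfold symbolCoeff
  simp only [h _ (norm_circleParam _)]

lemma symbolCoeff_add {t u : ℂ → ℂ} (ht : ContinuousOn t (Metric.sphere 0 1))
    (hu : ContinuousOn u (Metric.sphere 0 1)) (k : ℤ) :
    symbolCoeff (fun z => t z + u z) k = symbolCoeff t k + symbolCoeff u k := by
  unfold symbolCoeff
  rw [← mul_add, ← intervalIntegral.integral_add]
  · simp only [add_mul]
  · exact ((continuous_circleParam ht).mul (by fun_prop)).intervalIntegrable _ _
  · exact ((continuous_circleParam hu).mul (by fun_prop)).intervalIntegrable _ _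

/-- Convolution formula for multiplication by an absolutely convergent power series. -/
lemma hasSum_symbolCoeff_mul {t F : ℂ → ℂ} {c : ℕ → ℂ} (ht : ContinuousOn t (Metric.sphere 0 1))
    (hc : Summable fun l => ‖c l‖) (hF : ∀ z, ‖z‖ = 1 → HasSum (fun l => c l * z ^ l) (F z))
    (k : ℤ) :
    HasSum (fun l : ℕ => c l * symbolCoeff t (k - l)) (symbolCoeff (fun z => F z * t z) k) := by
  have hcont := continuous_circleParam ht
  obtain ⟨B, hB⟩ := ((isCompact_sphere (0 : ℂ) 1).image_of_continuousOn ht).isBounded.exists_norm_le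
  have hB' : ∀ θ : ℝ, ‖t (Complex.exp (Complex.I * (θ : ℂ)))‖ ≤ B := fun θ =>
    hB _ ⟨_, by rw [mem_sphere_zero_iff_norm, norm_circleParam], rfl⟩
  have key := intervalIntegral.hasSum_integral_of_dominated_convergence (μ := MeasureTheory.volume)
    (a := 0) (b := 2 * Real.pi)
    (F := fun (l : ℕ) (θ : ℝ) => c l * (t (Complex.exp (Complex.I * (θ : ℂ))) *
      Complex.exp (-(Complex.I * ((k - l : ℤ) : ℂ) * (θ : ℂ)))))
    (f := fun θ : ℝ => F (Complex.exp (Complex.I * (θ : ℂ))) *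
      t (Complex.exp (Complex.I * (θ : ℂ))) * Complex.exp (-(Complex.I * (k : ℂ) * (θ : ℂ))))
    (fun l _ => ‖c l‖ * B)
    (fun l => (continuous_const.mul (hcont.mul (by fun_prop))).aestronglyMeasurable)
    (fun l => .of_forall fun θ _ => ?_) (.of_forall fun θ _ => hc.mul_right B)
    (intervalIntegrable_const) (.of_forall fun θ _ => ?_)
  · have := key.mul_left (1 / (2 * Real.pi) : ℂ)
    convert! this using 2 with l
    unfold symbolCoeff
    rw [intervalIntegral.integral_const_mul]
    ring
  · rw [norm_mul, norm_mul, norm_circleChar, mul_one]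
    gcongr
    exact hB' θ
  · have h := (hF _ (norm_circleParam θ)).mul_right
      (t (Complex.exp (Complex.I * (θ : ℂ))) * Complex.exp (-(Complex.I * (k : ℂ) * (θ : ℂ))))
    rw [← mul_assoc] at h
    convert! h using 2 with l
    rw [← Complex.exp_nat_mul]
    have : Complex.exp (-(Complex.I * ((k - l : ℤ) : ℂ) * (θ : ℂ))) =
        Complex.exp (l * (Complex.I * θ)) * Complex.exp (-(Complex.I * (k : ℂ) * (θ : ℂ))) := by
      rw [← Complex.exp_add]; congr 1; push_cast; ring
    rw [this]; ring

lemma symbolCoeff_comp_inv (t : ℂ → ℂ) (k : ℤ) :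
    symbolCoeff (fun z => t z⁻¹) k = symbolCoeff t (-k) := by
  unfold symbolCoeff
  congr 1
  have h := intervalIntegral.integral_comp_sub_left (a := 0) (b := 2 * Real.pi)
    (fun θ : ℝ => t (Complex.exp (Complex.I * (θ : ℂ))) *
      Complex.exp (-(Complex.I * ((-k : ℤ) : ℂ) * (θ : ℂ)))) (2 * Real.pi)
  rw [sub_self, sub_zero] at h
  rw [← h]
  refine intervalIntegral.integral_congr fun θ _ => ?_
  have h1 : Complex.exp (Complex.I * ((2 * Real.pi - θ : ℝ) : ℂ)) =
      (Complex.exp (Complex.I * θ))⁻¹ := by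
    rw [← Complex.exp_neg, show Complex.I * ((2 * Real.pi - θ : ℝ) : ℂ) =
      -(Complex.I * θ) + 2 * Real.pi * Complex.I by push_cast; ring, Complex.exp_periodic]
  have h2 : Complex.exp (-(Complex.I * ((-k : ℤ) : ℂ) * ((2 * Real.pi - θ : ℝ) : ℂ))) =
      Complex.exp (-(Complex.I * (k : ℂ) * (θ : ℂ))) := by
    rw [show -(Complex.I * ((-k : ℤ) : ℂ) * ((2 * Real.pi - θ : ℝ) : ℂ)) =
      -(Complex.I * (k : ℂ) * (θ : ℂ)) + k * (2 * Real.pi * Complex.I) by push_cast; ring,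
      Complex.exp_add, Complex.exp_int_mul_two_pi_mul_I, mul_one]
  simp only [h1, h2]

lemma symbolCoeff_one (k : ℤ) : symbolCoeff (fun _ => 1) k = if k = 0 then 1 else 0 := by
  unfold symbolCoeff
  split_ifs with hk
  · subst hk
    have hpi : (Real.pi : ℂ) ≠ 0 := by exact_mod_cast Real.pi_ne_zero
    simp
    field_simp
  · have hk' : -(Complex.I * (k : ℂ)) ≠ 0 := by simp [hk]
    have h := integral_exp_mul_complex (a := 0) (b := 2 * Real.pi) hk'
    simp only [one_mul, ← neg_mul] at h ⊢
    rw [h]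
    have : Complex.exp (-Complex.I * k * ((2 * Real.pi : ℝ) : ℂ)) = 1 := by
      rw [show -Complex.I * (k : ℂ) * ((2 * Real.pi : ℝ) : ℂ) =
        (-k : ℤ) * (2 * Real.pi * Complex.I) by push_cast; ring]
      exact Complex.exp_int_mul_two_pi_mul_I _
    rw [this]; simp

lemma symbolCoeff_powerSeries {F : ℂ → ℂ} {c : ℕ → ℂ}
    (hc : Summable fun l => ‖c l‖) (hF : ∀ z, ‖z‖ = 1 → HasSum (fun l => c l * z ^ l) (F z))
    (k : ℤ) : symbolCoeff F k = if 0 ≤ k then c k.toNat else 0 := by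
  have h := hasSum_symbolCoeff_mul (t := fun _ => 1) continuousOn_const hc hF k
  simp only [mul_one, symbolCoeff_one] at h
  refine h.unique ?_
  split_ifs with hk
  · convert! hasSum_ite_eq k.toNat (c k.toNat) using 2 with l
    by_cases hl : l = k.toNat
    · subst hl; simp [hk]
    · rw [if_neg, if_neg hl, mul_zero]
      omega
  · convert! hasSum_zero using 2 with l
    rw [if_neg (by omega), mul_zero]

/-- Bessel's inequality for a unimodular symbol. -/
lemma sum_norm_symbolCoeff_sq_le {t : ℂ → ℂ} (ht : ContinuousOn t (Metric.sphere 0 1))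
    (h1 : ∀ z, ‖z‖ = 1 → ‖t z‖ = 1) (s : Finset ℤ) : ∑ k ∈ s, ‖symbolCoeff t k‖ ^ 2 ≤ 1 := by
  have : Fact (0 < 2 * Real.pi) := ⟨Real.two_pi_pos⟩
  have hcont : Continuous fun x : AddCircle (2 * Real.pi) => t (AddCircle.toCircle x : ℂ) :=
    ht.comp_continuous (continuous_subtype_val.comp AddCircle.continuous_toCircle)
      fun x => mem_sphere_zero_iff_norm.mpr (Circle.norm_coe _)
  let f : C(AddCircle (2 * Real.pi), ℂ) := ⟨_, hcont⟩
  let f2 := ContinuousMap.toLp (E := ℂ) 2 AddCircle.haarAddCircle ℂ f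
  have hcoe : f2 =ᵐ[AddCircle.haarAddCircle] f := ContinuousMap.coeFn_toLp _ _
  have hcoeff : ∀ k, fourierCoeff f2 k = symbolCoeff t k := by
    intro k
    rw [show fourierCoeff f2 k = fourierCoeff f k from
      MeasureTheory.integral_congr_ae (hcoe.mono fun x hx => by simp [hx]),
      fourierCoeff_eq_intervalIntegral _ _ 0]
    unfold symbolCoeff
    rw [zero_add, Complex.real_smul]
    congr 1
    · push_cast; rfl
    refine intervalIntegral.integral_congr fun θ _ => ?_
    simp only [fourier_coe_apply, smul_eq_mul, f, ContinuousMap.coe_mk,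
      AddCircle.toCircle_apply_mk, Circle.coe_exp]
    rw [mul_comm]
    have hpi : (Real.pi : ℂ) ≠ 0 := by exact_mod_cast Real.pi_ne_zero
    congr 2
    · congr 1
      push_cast
      field_simp
    · push_cast
      field_simp
  have hpars := hasSum_sq_fourierCoeff f2
  have hnorm_integral : ∫ x, ‖f2 x‖ ^ 2 ∂AddCircle.haarAddCircle (T := 2 * Real.pi) = 1 := by
    rw [MeasureTheory.integral_congr_ae (g := fun _ => (1 : ℝ))]
    · simp
    · filter_upwards [hcoe] with x hx
      rw [hx]
      simp [f, h1 _ (Circle.norm_coe _)]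
  rw [hnorm_integral] at hpars
  simp only [hcoeff] at hpars
  exact sum_le_hasSum _ (fun _ _ => by positivity) hpars

lemma norm_symbolCoeff_le_one {t : ℂ → ℂ} (ht : ContinuousOn t (Metric.sphere 0 1))
    (h1 : ∀ z, ‖z‖ = 1 → ‖t z‖ = 1) (k : ℤ) : ‖symbolCoeff t k‖ ≤ 1 := by
  have := sum_norm_symbolCoeff_sq_le ht h1 {k}
  rw [Finset.sum_singleton] at this
  exact (sq_le_one_iff₀ (norm_nonneg _)).mp this

lemma toeplitz_row_norm_le {t : ℂ → ℂ} (ht : ContinuousOn t (Metric.sphere 0 1))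
    (h1 : ∀ z, ‖z‖ = 1 → ‖t z‖ = 1) (N : ℕ) (i : Fin N) :
    ∑ j : Fin N, ‖symbolCoeff t ((i : ℤ) - (j : ℤ))‖ ^ 2 ≤ 1 := by
  have hinj : Function.Injective fun j : Fin N => (i : ℤ) - (j : ℤ) := by
    intro a b hab
    simp only at hab
    ext; omega
  simpa using sum_norm_symbolCoeff_sq_le ht h1 (Finset.univ.map ⟨_, hinj⟩)

lemma summable_prod_of_geometric_bound {F : ℕ × ℕ → ℂ} {K σ : ℝ} (hσ0 : 0 ≤ σ) (hσ1 : σ < 1)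
    (h : ∀ a l, ‖F (a, l)‖ ≤ K * (σ ^ a * σ ^ l)) : Summable F := by
  have hs := summable_geometric_of_lt_one hσ0 hσ1
  refine Summable.of_norm_bounded
    ((hs.mul_of_nonneg hs (fun _ => by positivity) fun _ => by positivity).mul_left K)
    fun p => h p.1 p.2

lemma hasSum_antidiagonal {F : ℕ × ℕ → ℂ} {S : ℂ} (h : HasSum F S) :
    HasSum (fun n => ∑ p ∈ Finset.HasAntidiagonal.antidiagonal n, F p) S := by
  have h' := (Finset.HasAntidiagonal.sigmaAntidiagonalEquivProd (A := ℕ)).hasSum_iff.mpr h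
  refine HasSum.sigma (g := fun n => ∑ p ∈ Finset.HasAntidiagonal.antidiagonal n, F p) h'
    fun n => ?_
  rw [← Finset.sum_finset_coe]
  exact hasSum_fintype _

lemma hasSum_of_geometric_bound {F : ℕ → ℂ} {K σ : ℝ} (hσ0 : 0 ≤ σ) (hσ1 : σ < 1)
    (h : ∀ a, ‖F a‖ ≤ K * σ ^ a) : HasSum F (∑' a, F a) ∧ ‖∑' a, F a‖ ≤ K / (1 - σ) := by
  have hs := (hasSum_geometric_of_lt_one hσ0 hσ1).mul_left K
  exact ⟨(Summable.of_norm_bounded hs.summable h).hasSum, tsum_of_norm_bounded hs h⟩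

/-- Approximate right inverse of a Toeplitz operator applied to a product of Hankel operators:
`w` are the coefficients of the analytic perturbation, `τ` those of the symbol, whose Wiener–Hopf
factors have inverse `q` and (co-analytic factor) `b` with inverse `d`. -/
lemma exists_toeplitz_solution {ρ σ C K₀ : ℝ} (hρ : 0 ≤ ρ) (hρσ : ρ ≤ σ) (hσ : σ < 1)
    (hC : 0 ≤ C) (hK₀ : ∀ i : ℕ, (i + 1) * ρ ^ i ≤ K₀ * σ ^ i) {w q b d u : ℕ → ℂ} {τ : ℤ → ℂ}
    (hw : ∀ n, ‖w n‖ ≤ C * ρ ^ n) (hq : ∀ n, ‖q n‖ ≤ C * ρ ^ n)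
    (hb : ∀ n, ‖b n‖ ≤ C * ρ ^ n) (hd : ∀ n, ‖d n‖ ≤ C * ρ ^ n) (hτ : ∀ k, ‖τ k‖ ≤ 1)
    (hbd : ∀ n, ∑ p ∈ Finset.HasAntidiagonal.antidiagonal n, b p.1 * d p.2 = if n = 0 then 1 else 0)
    (hqτ : ∀ k : ℤ, HasSum (fun a : ℕ => q a * τ (k - a)) (if k ≤ 0 then b (-k).toNat else 0))
    (hu : ∀ n, ∑ p ∈ Finset.HasAntidiagonal.antidiagonal n, (p.1 + 1) * b (p.1 + 1) * d p.2 = u n) :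
    ∃ X : ℕ → ℕ → ℂ, (∀ i n, ‖X i n‖ ≤ C * (C * C / (1 - ρ)) * K₀ / (1 - σ) * σ ^ i) ∧
      (∀ m n : ℕ, HasSum (fun i : ℕ => τ (m - i) * X i n)
        (∑' j : ℕ, w (m + j + 1) * τ (-(j + n + 1)))) ∧
      HasSum (fun i => X i i) (∑' k, w (k + 1) * u k) := by
  have hρ1 : ρ < 1 := hρσ.trans_lt hσ
  have hσ0 : 0 ≤ σ := hρ.trans hρσ
  have h1ρ : 0 < 1 - ρ := by linarith
  have h1σ : 0 < 1 - σ := by linarith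
  have hK₀' : 0 ≤ K₀ := by have := hK₀ 0; simp at this; linarith
  have hpow : ∀ n, ρ ^ n ≤ σ ^ n := fun n => pow_le_pow_left₀ hρ hρσ n
  have hwb : ∀ n, ‖w (n + 1)‖ ≤ C * ρ ^ n := fun n => (hw _).trans
    (by gcongr C * ?_; exact pow_le_pow_of_le_one hρ hρ1.le (Nat.le_succ n))
  have hbb : ∀ n, ‖b (n + 1)‖ ≤ C * ρ ^ n := fun n => (hb _).trans
    (by gcongr C * ?_; exact pow_le_pow_of_le_one hρ hρ1.le (Nat.le_succ n))
  set C₁ : ℝ := C * C / (1 - ρ) with hC₁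
  have hC₁0 : 0 ≤ C₁ := by positivity
  -- the Hankel sequence `T(d) H(w)`
  let y : ℕ → ℂ := fun n => ∑' c, d c * w (n + c + 1)
  have hyterm : ∀ n c, ‖d c * w (n + c + 1)‖ ≤ C * C * ρ ^ n * ρ ^ c := by
    intro n c
    rw [norm_mul]
    calc ‖d c‖ * ‖w (n + c + 1)‖ ≤ C * 1 * (C * ρ ^ (n + c)) := by
          gcongr
          · exact (hd c).trans (by gcongr C * ?_; exact pow_le_one₀ hρ hρ1.le)
          · exact hwb _
      _ = _ := by rw [pow_add]; ring
  have hyS : ∀ n, HasSum (fun c => d c * w (n + c + 1)) (y n) := fun n =>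
    (hasSum_of_geometric_bound hρ hρ1 (hyterm n)).1
  have hy : ∀ n, ‖y n‖ ≤ C₁ * ρ ^ n := fun n =>
    (hasSum_of_geometric_bound hρ hρ1 (hyterm n)).2.trans (le_of_eq (by rw [hC₁]; ring))
  have hby : ∀ n, HasSum (fun a => b a * y (n + a)) (w (n + 1)) := by
    intro n
    have hF : Summable fun p : ℕ × ℕ => b p.1 * (d p.2 * w (n + p.1 + p.2 + 1)) := by
      refine summable_prod_of_geometric_bound (K := C * C * C) hρ hρ1 fun a c => ?_
      rw [norm_mul]
      calc ‖b a‖ * ‖d c * w (n + a + c + 1)‖ ≤ (C * 1) * (C * C * ρ ^ (n + a) * ρ ^ c) := by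
            gcongr
            · exact (hb a).trans (by gcongr C * ?_; exact pow_le_one₀ hρ hρ1.le)
            · exact hyterm _ _
        _ ≤ (C * 1) * (C * C * ρ ^ a * ρ ^ c) := by
            gcongr C * 1 * (C * C * ?_ * ρ ^ c)
            exact pow_le_pow_of_le_one hρ hρ1.le (by omega)
        _ = _ := by ring
    have h1 := hasSum_antidiagonal hF.hasSum
    have h2 := hF.hasSum.prod_fiberwise fun a => (hyS (n + a)).mul_left (b a)
    have h3 : (fun k => ∑ p ∈ Finset.HasAntidiagonal.antidiagonal k,
        b p.1 * (d p.2 * w (n + p.1 + p.2 + 1))) =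
        fun k => if k = 0 then w (n + 1) else 0 := by
      ext k
      have : ∀ p ∈ Finset.HasAntidiagonal.antidiagonal k, b p.1 * (d p.2 * w (n + p.1 + p.2 + 1)) =
          b p.1 * d p.2 * w (n + k + 1) := by
        intro p hp
        rw [← Finset.HasAntidiagonal.mem_antidiagonal.mp hp, ← add_assoc, mul_assoc]
      rw [Finset.sum_congr rfl this, ← Finset.sum_mul, hbd]
      split_ifs with hk
      · subst hk; simp
      · simp
    rw [h3] at h1
    have h4 := (hasSum_ite_eq 0 (w (n + 1))).unique h1
    rw [h4]
    exact h2
  -- columns of `T(q) T(d) H(w)`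
  let x : ℕ → ℕ → ℂ := fun j i => ∑ p ∈ Finset.HasAntidiagonal.antidiagonal i, q p.1 * y (p.2 + j)
  have hx : ∀ j i, ‖x j i‖ ≤ C * C₁ * K₀ * (σ ^ i * σ ^ j) := by
    intro j i
    calc ‖x j i‖ ≤ ∑ p ∈ Finset.HasAntidiagonal.antidiagonal i, C * C₁ * (ρ ^ i * ρ ^ j) := by
          refine norm_sum_le_of_le _ fun p hp => ?_
          rw [norm_mul]
          calc ‖q p.1‖ * ‖y (p.2 + j)‖ ≤ (C * ρ ^ p.1) * (C₁ * ρ ^ (p.2 + j)) := by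
                gcongr
                · exact hq _
                · exact hy _
            _ = _ := by rw [← Finset.HasAntidiagonal.mem_antidiagonal.mp hp]; ring
      _ = C * C₁ * (((i + 1) * ρ ^ i) * ρ ^ j) := by
          rw [Finset.sum_const, Finset.Nat.card_antidiagonal, nsmul_eq_mul]; push_cast; ring
      _ ≤ C * C₁ * ((K₀ * σ ^ i) * σ ^ j) := by
          gcongr C * C₁ * (?_ * ?_)
          · exact hK₀ i
          · exact hpow j
      _ = _ := by ring
  have hTx : ∀ (m : ℤ) (j : ℕ), HasSum (fun i : ℕ => τ (m - i) * x j i)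
      (∑' l : ℕ, y (l + j) * (if m - l ≤ 0 then b (-(m - l)).toNat else 0)) := by
    intro m j
    have hF : Summable fun p : ℕ × ℕ => y (p.1 + j) * (q p.2 * τ (m - p.1 - p.2)) := by
      refine summable_prod_of_geometric_bound (K := C₁ * C) hρ hρ1 fun l a => ?_
      rw [norm_mul, norm_mul]
      calc ‖y (l + j)‖ * (‖q a‖ * ‖τ (m - l - a)‖) ≤ (C₁ * ρ ^ l) * ((C * ρ ^ a) * 1) := by
            gcongr
            · exact (hy _).trans (by
                gcongr C₁ * ?_; exact pow_le_pow_of_le_one hρ hρ1.le (by omega))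
            · exact hq a
            · exact hτ _
        _ = _ := by ring
    have h1 := hasSum_antidiagonal ((Equiv.prodComm ℕ ℕ).hasSum_iff.mpr hF.hasSum)
    have h2 := hF.hasSum.prod_fiberwise fun l => (hqτ (m - l)).mul_left (y (l + j))
    rw [h2.tsum_eq]
    convert! h1 using 2 with i
    rw [Finset.mul_sum]
    refine Finset.sum_congr rfl fun p hp => ?_
    simp only [Function.comp_apply, Equiv.prodComm_apply, Prod.fst_swap, Prod.snd_swap]
    rw [← Finset.HasAntidiagonal.mem_antidiagonal.mp hp]
    push_cast
    rw [show m - ((p.1 : ℤ) + p.2) = m - p.2 - p.1 by ring]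
    ring
  have hTxw : ∀ m j : ℕ, HasSum (fun i : ℕ => τ (m - i) * x j i) (w (m + j + 1)) := by
    intro m j
    convert hTx m j using 1
    have h := hby (m + j)
    have hinj : Function.Injective fun a : ℕ => a + m := add_left_injective m
    have h' : HasSum ((fun l : ℕ => y (l + j) *
        (if (m : ℤ) - l ≤ 0 then b (-((m : ℤ) - l)).toNat else 0)) ∘ fun a : ℕ => a + m)
        (w (m + j + 1)) := by
      convert! h using 2 with a
      simp only [Function.comp_apply]
      rw [if_pos (by push_cast; omega), mul_comm]
      congr 2
      · push_cast; omega
      · omega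
    refine ((hinj.hasSum_iff fun l hl => ?_).mp h').tsum_eq.symm
    rw [if_neg, mul_zero]
    intro hml
    exact hl ⟨l - m, by simp only; omega⟩
  let X : ℕ → ℕ → ℂ := fun i n => ∑' j : ℕ, x j i * τ (-(j + n + 1))
  have hXterm : ∀ i n j : ℕ,
      ‖x j i * τ (-((j : ℤ) + n + 1))‖ ≤ C * C₁ * K₀ * σ ^ i * σ ^ j := by
    intro i n j
    rw [norm_mul]
    calc _ ≤ C * C₁ * K₀ * (σ ^ i * σ ^ j) * 1 := by
          gcongr
          · exact hx j i
          · exact hτ _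
      _ = _ := by ring
  have hXS : ∀ i n : ℕ, HasSum (fun j : ℕ => x j i * τ (-((j : ℤ) + n + 1))) (X i n) :=
    fun i n => (hasSum_of_geometric_bound hσ0 hσ (hXterm i n)).1
  refine ⟨X, fun i n => (hasSum_of_geometric_bound hσ0 hσ (hXterm i n)).2.trans
    (le_of_eq (by ring)), fun m n => ?_, ?_⟩
  · have hF : Summable fun p : ℕ × ℕ => τ (m - p.1) * (x p.2 p.1 * τ (-((p.2 : ℤ) + n + 1))) := by
      refine summable_prod_of_geometric_bound (K := C * C₁ * K₀) hσ0 hσ fun i j => ?_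
      rw [norm_mul]
      calc _ ≤ 1 * (C * C₁ * K₀ * σ ^ i * σ ^ j) := by
            gcongr
            · exact hτ _
            · exact hXterm i n j
        _ = _ := by ring
    have h1 := hF.hasSum.prod_fiberwise fun i => (hXS i n).mul_left (τ (m - i))
    have h2 := ((Equiv.prodComm ℕ ℕ).hasSum_iff.mpr hF.hasSum).prod_fiberwise
      (g := fun j : ℕ => w (m + j + 1) * τ (-((j : ℤ) + n + 1))) fun j => by
        convert! (hTxw m j).mul_right (τ (-((j : ℤ) + n + 1))) using 2 with i
        simp only [Function.comp_apply, Equiv.prodComm_apply, Prod.swap_prod_mk]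
        ring
    rw [h2.tsum_eq]
    exact h1
  · have hF : Summable fun p : ℕ × ℕ => x p.2 p.1 * τ (-((p.2 : ℤ) + p.1 + 1)) :=
      summable_prod_of_geometric_bound (K := C * C₁ * K₀) hσ0 hσ fun i j =>
        (hXterm i i j).trans (le_of_eq (by ring))
    have h1 := hF.hasSum.prod_fiberwise fun i => hXS i i
    have hG : Summable fun p : ℕ × ℕ => y (p.2 + p.1) * b (p.2 + p.1 + 1) := by
      refine summable_prod_of_geometric_bound (K := C₁ * C) hρ hρ1 fun j l => ?_
      rw [norm_mul]
      calc _ ≤ (C₁ * ρ ^ (l + j)) * (C * 1) := by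
            gcongr
            · exact hy _
            · exact (hb _).trans (by gcongr C * ?_; exact pow_le_one₀ hρ hρ1.le)
        _ = _ := by rw [pow_add]; ring
    have h2 := ((Equiv.prodComm ℕ ℕ).hasSum_iff.mpr hF.hasSum).prod_fiberwise
      (g := fun j : ℕ => ∑' l : ℕ, y (l + j) * b (l + j + 1)) fun j => by
        convert! hTx (-(j + 1)) j using 2 with i
        · simp only [Function.comp_apply, Equiv.prodComm_apply, Prod.swap_prod_mk]
          rw [mul_comm]
          congr 2
          ring
        · funext l
          rw [if_pos (by omega)]
          congr 2
          omega
    have h3 := hG.hasSum.prod_fiberwise (fun j => (hG.prod_factor j).hasSum)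
    have h4 := hasSum_antidiagonal hG.hasSum
    have hH : Summable fun p : ℕ × ℕ =>
        (p.1 + 1) * b (p.1 + 1) * (d p.2 * w (p.1 + p.2 + 1)) := by
      refine summable_prod_of_geometric_bound (K := C * K₀ * (C * C)) hσ0 hσ fun n c => ?_
      rw [norm_mul, norm_mul]
      have hn : ‖(n + 1 : ℂ)‖ = n + 1 := by
        rw [← Nat.cast_one, ← Nat.cast_add, Complex.norm_natCast]; push_cast; rfl
      rw [hn]
      calc _ ≤ (n + 1) * (C * ρ ^ n) * (C * C * ρ ^ n * ρ ^ c) := by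
            gcongr
            · exact hbb n
            · exact hyterm n c
        _ = C * ((n + 1) * ρ ^ n) * (C * C * ρ ^ n * ρ ^ c) := by ring
        _ ≤ C * (K₀ * σ ^ n) * (C * C * 1 * σ ^ c) := by
            gcongr C * ?_ * (C * C * ?_ * ?_)
            · exact hK₀ n
            · exact pow_le_one₀ hρ hρ1.le
            · exact hpow c
        _ = _ := by ring
    have h5 := hH.hasSum.prod_fiberwise fun n => (hyS n).mul_left ((n + 1) * b (n + 1))
    have h6 := hasSum_antidiagonal hH.hasSum
    have e1 : (fun n => ∑ p ∈ Finset.HasAntidiagonal.antidiagonal n,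
        y (p.2 + p.1) * b (p.2 + p.1 + 1)) =
        fun n : ℕ => (n + 1) * b (n + 1) * y n := by
      ext n
      rw [Finset.sum_congr rfl (g := fun _ => y n * b (n + 1)) fun p hp => by
        rw [add_comm p.2, Finset.HasAntidiagonal.mem_antidiagonal.mp hp]]
      rw [Finset.sum_const, Finset.Nat.card_antidiagonal, nsmul_eq_mul]
      push_cast
      ring
    have e2 : (fun n => ∑ p ∈ Finset.HasAntidiagonal.antidiagonal n,
        (p.1 + 1) * b (p.1 + 1) * (d p.2 * w (p.1 + p.2 + 1))) =
        fun n : ℕ => w (n + 1) * u n := by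
      ext n
      rw [← hu n, Finset.mul_sum]
      refine Finset.sum_congr rfl fun p hp => ?_
      rw [Finset.HasAntidiagonal.mem_antidiagonal.mp hp]
      ring
    rw [e1] at h4
    rw [e2] at h6
    rw [h6.tsum_eq, h5.unique h4, h3.unique h2]
    exact h1

/-- The `n`-th Taylor coefficient at the origin. -/
noncomputable def taylorCoeff (F : ℂ → ℂ) (n : ℕ) : ℂ :=
  (n.factorial : ℂ)⁻¹ * iteratedDeriv n F 0

lemma hasSum_taylorCoeff {F : ℂ → ℂ} {R : ℝ} (hF : DifferentiableOn ℂ F (Metric.ball 0 R)) {z : ℂ}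
    (hz : ‖z‖ < R) : HasSum (fun n => taylorCoeff F n * z ^ n) (F z) := by
  convert! Complex.hasSum_taylorSeries_on_ball hF (mem_ball_zero_iff.mpr hz) using 2 with n
  rw [taylorCoeff, sub_zero, smul_eq_mul, smul_eq_mul]
  ring

lemma norm_taylorCoeff_le {F : ℂ → ℂ} {R r B : ℝ} (hF : DifferentiableOn ℂ F (Metric.ball 0 R))
    (hr : 0 < r) (hrR : r < R) (hB : ∀ z ∈ Metric.closedBall 0 r, ‖F z‖ ≤ B) (n : ℕ) :
    ‖taylorCoeff F n‖ ≤ B * r⁻¹ ^ n := by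
  have h := Complex.norm_iteratedDeriv_le_of_forall_mem_sphere_norm_le n hr
    (hF.diffContOnCl_ball (Metric.closedBall_subset_ball hrR))
    fun z hz => hB z (Metric.sphere_subset_closedBall hz)
  have hn : (0 : ℝ) < n.factorial := by exact_mod_cast n.factorial_pos
  rw [taylorCoeff, norm_mul, norm_inv, Complex.norm_natCast, inv_mul_le_iff₀ hn]
  refine h.trans (le_of_eq ?_)
  rw [inv_pow]
  field_simp

lemma summable_norm_taylorCoeff {F : ℂ → ℂ} {R : ℝ} (hF : DifferentiableOn ℂ F (Metric.ball 0 R))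
    (hR : 1 < R) : Summable fun n => ‖taylorCoeff F n‖ := by
  simpa using (hasSum_taylorCoeff hF (z := 1) (by simpa using hR)).summable.norm

lemma taylorCoeff_deriv (F : ℂ → ℂ) (n : ℕ) :
    taylorCoeff (deriv F) n = (n + 1) * taylorCoeff F (n + 1) := by
  have h1 : (n.factorial : ℂ) ≠ 0 := by exact_mod_cast n.factorial_ne_zero
  have h2 : (n + 1 : ℂ) ≠ 0 := by exact_mod_cast n.succ_ne_zero
  rw [taylorCoeff, taylorCoeff, iteratedDeriv_succ', Nat.factorial_succ]
  push_cast
  field_simp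

lemma taylorCoeff_zero (F : ℂ → ℂ) : taylorCoeff F 0 = F 0 := by
  simp [taylorCoeff]

lemma taylorCoeff_eq_of_hasSum {F : ℂ → ℂ} {R : ℝ} (hF : DifferentiableOn ℂ F (Metric.ball 0 R))
    (hR : 1 < R) {c : ℕ → ℂ} (hc : Summable fun n => ‖c n‖)
    (h : ∀ z, ‖z‖ = 1 → HasSum (fun n => c n * z ^ n) (F z)) (n : ℕ) :
    taylorCoeff F n = c n := by
  have h1 := symbolCoeff_powerSeries hc h n
  have h2 := symbolCoeff_powerSeries (summable_norm_taylorCoeff hF hR)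
    (fun z hz => hasSum_taylorCoeff hF (by rw [hz]; exact hR)) n
  simpa using h2.symm.trans h1

lemma sum_taylorCoeff_mul {F G H : ℂ → ℂ} {R : ℝ} (hF : DifferentiableOn ℂ F (Metric.ball 0 R))
    (hG : DifferentiableOn ℂ G (Metric.ball 0 R)) (hR : 1 < R)
    (hH : ∀ z ∈ Metric.ball 0 R, H z = F z * G z) (n : ℕ) :
    ∑ p ∈ Finset.HasAntidiagonal.antidiagonal n, taylorCoeff F p.1 * taylorCoeff G p.2 =
      taylorCoeff H n := by
  have hs : Summable fun n => ‖∑ p ∈ Finset.HasAntidiagonal.antidiagonal n,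
      taylorCoeff F p.1 * taylorCoeff G p.2‖ :=
    summable_norm_sum_mul_antidiagonal_of_summable_norm (summable_norm_taylorCoeff hF hR)
      (summable_norm_taylorCoeff hG hR)
  refine (taylorCoeff_eq_of_hasSum ((hF.mul hG).congr hH) hR hs (fun z hz => ?_) n).symm
  have hzR : ‖z‖ < R := by rw [hz]; exact hR
  rw [hH z (mem_ball_zero_iff.mpr hzR)]
  have hf := hasSum_taylorCoeff hF hzR
  have hg := hasSum_taylorCoeff hG hzR
  have hfg := summable_mul_of_summable_norm hf.summable.norm hg.summable.norm
  refine (hasSum_antidiagonal (hf.mul hg hfg)).congr_fun fun m => ?_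
  rw [Finset.sum_mul]
  refine Finset.sum_congr rfl fun p hp => ?_
  rw [← Finset.HasAntidiagonal.mem_antidiagonal.mp hp]
  ring

lemma exists_linear_geometric_bound {ρ : ℝ} (h0 : 0 < ρ) (h1 : ρ < 1) :
    ∃ K σ : ℝ, ρ ≤ σ ∧ σ < 1 ∧ ∀ i : ℕ, (i + 1) * ρ ^ i ≤ K * σ ^ i := by
  refine ⟨1 + (1 - ρ)⁻¹ * 2 * ρ, (1 + ρ) / 2, by linarith, by linarith, fun i => ?_⟩
  have hpos : 0 < 1 - ρ := by linarith
  have hb := one_add_mul_le_pow (a := (1 - ρ) / (2 * ρ))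
    (by have : 0 ≤ (1 - ρ) / (2 * ρ) := by positivity
        linarith) i
  have hσ : ((1 + ρ) / 2) ^ i = (1 + (1 - ρ) / (2 * ρ)) ^ i * ρ ^ i := by
    rw [← mul_pow]; congr 1; field_simp; ring
  rw [hσ, ← mul_assoc]
  gcongr
  calc (i + 1 : ℝ) ≤ (1 + (1 - ρ)⁻¹ * 2 * ρ) * (1 + i * ((1 - ρ) / (2 * ρ))) := by
        have e : (1 + (1 - ρ)⁻¹ * 2 * ρ) * (1 + i * ((1 - ρ) / (2 * ρ))) =
          1 + i + (1 - ρ)⁻¹ * 2 * ρ + i * ((1 - ρ) / (2 * ρ)) := by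
          field_simp
          ring
        rw [e]
        have : 0 ≤ (1 - ρ)⁻¹ * 2 * ρ := by positivity
        have : 0 ≤ i * ((1 - ρ) / (2 * ρ)) := by positivity
        linarith
    _ ≤ _ := by gcongr

/-- The symbol `exp (s (f(z) + g(1/z)))`. -/
noncomputable def expSymbol (f g : ℂ → ℂ) (s : ℝ) (z : ℂ) : ℂ :=
  Complex.exp (s * (f z + g z⁻¹))

lemma continuousOn_sphere_of_ball {f : ℂ → ℂ} {R : ℝ} (hR : 1 < R)
    (hf : DifferentiableOn ℂ f (Metric.ball 0 R)) : ContinuousOn f (Metric.sphere 0 1) :=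
  hf.continuousOn.mono fun z hz => by
    rw [mem_sphere_zero_iff_norm] at hz
    rw [mem_ball_zero_iff, hz]
    exact hR

lemma ContinuousOn.comp_inv_sphere {g : ℂ → ℂ} (hg : ContinuousOn g (Metric.sphere 0 1)) :
    ContinuousOn (fun z => g z⁻¹) (Metric.sphere 0 1) := by
  refine hg.comp (continuousOn_inv₀.mono fun z hz => ?_) fun z hz => ?_
  · rintro rfl
    simp at hz
  · rw [mem_sphere_zero_iff_norm] at hz ⊢
    rw [norm_inv, hz, inv_one]

lemma continuousOn_expSymbol {f g : ℂ → ℂ} {R : ℝ} (hR : 1 < R)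
    (hf : DifferentiableOn ℂ f (Metric.ball 0 R)) (hg : DifferentiableOn ℂ g (Metric.ball 0 R))
    (s : ℝ) : ContinuousOn (expSymbol f g s) (Metric.sphere 0 1) :=
  (continuousOn_const.mul ((continuousOn_sphere_of_ball hR hf).add
    (continuousOn_sphere_of_ball hR hg).comp_inv_sphere)).cexp

lemma norm_expSymbol {f g : ℂ → ℂ} (hre : ∀ z, ‖z‖ = 1 → (f z + g z⁻¹).re = 0) (s : ℝ) (z : ℂ)
    (hz : ‖z‖ = 1) : ‖expSymbol f g s z‖ = 1 := by
  rw [expSymbol, Complex.norm_exp, Complex.re_ofReal_mul, hre z hz, mul_zero, Real.exp_zero]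

/-- The exponent `∑ k f_k g_k` of Szegő's strong limit theorem. -/
noncomputable def szegoExponent (f g : ℂ → ℂ) : ℂ :=
  ∑' k : ℕ, taylorCoeff f (k + 1) * ((k + 1) * taylorCoeff g (k + 1))

/-- The `N × N` Toeplitz matrix of a symbol. -/
noncomputable def toeplitzMatrix (t : ℂ → ℂ) (N : ℕ) : Matrix (Fin N) (Fin N) ℂ :=
  Matrix.of fun m n : Fin N => symbolCoeff t ((m : ℤ) - (n : ℤ))

/-- Splitting of `T_N(f t)` into `T_N(f) T_N(t)` and a product of Hankel matrices. -/
lemma symbolCoeff_mul_split {w : ℕ → ℂ} {τ : ℤ → ℂ} {N : ℕ} (m n : Fin N) {S : ℂ}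
    (h : HasSum (fun l : ℕ => w l * τ ((m : ℤ) - n - l)) S) :
    S = ∑ i : Fin N, (if i ≤ m then w (m - i : ℕ) else 0) * τ ((i : ℤ) - n) +
      ∑' j : ℕ, w (m + j + 1) * τ (-(j + n + 1)) := by
  rw [← h.tsum_eq, ← h.summable.sum_add_tsum_nat_add (m + 1 : ℕ)]
  congr 1
  · rw [← Finset.sum_range_reflect]
    have h1 : ∑ i : Fin N, (if i ≤ m then w (m - i : ℕ) else 0) * τ ((i : ℤ) - n) =
        ∑ i ∈ Finset.range N, (if i ≤ m then w (m - i : ℕ) else 0) * τ ((i : ℤ) - n) := by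
      rw [Finset.sum_range]
      simp only [Fin.le_def]
    rw [h1]
    have hsub : Finset.range (m + 1) ⊆ Finset.range N := Finset.range_mono m.2
    rw [← Finset.sum_subset hsub]
    · refine Finset.sum_congr rfl fun i hi => ?_
      have hi' : i ≤ m := Nat.lt_succ_iff.mp (Finset.mem_range.mp hi)
      rw [if_pos hi']
      have : (m : ℕ) + 1 - 1 - i = m - i := by omega
      rw [this]
      congr 2
      push_cast [hi']
      ring
    · intro i _ hi
      rw [if_neg (fun h => hi (Finset.mem_range.mpr (Nat.lt_succ_of_le h))), zero_mul]
  · refine tsum_congr fun j => ?_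
    rw [show j + ((m : ℕ) + 1) = m + j + 1 by ring]
    congr 2
    push_cast
    ring

open Matrix in
/-- Derivative estimate in the direction of the analytic part of the exponent. -/
lemma exists_trace_adjugate_bound {f g : ℂ → ℂ} {R : ℝ} (hR : 1 < R)
    (hf : DifferentiableOn ℂ f (Metric.ball 0 R)) (hg : DifferentiableOn ℂ g (Metric.ball 0 R))
    (hf0 : f 0 = 0) (hre : ∀ z, ‖z‖ = 1 → (f z + g z⁻¹).re = 0) :
    ∃ ε : ℕ → ℝ, Tendsto ε atTop (nhds 0) ∧ ∀ (N : ℕ) (s : ℝ), s ∈ Set.Icc (0 : ℝ) 1 →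
      ‖((toeplitzMatrix (expSymbol f g s) N).adjugate *
          toeplitzMatrix (fun z => f z * expSymbol f g s z) N).trace -
        s * szegoExponent f g * (toeplitzMatrix (expSymbol f g s) N).det‖ ≤ ε N := by
  obtain ⟨r, hr1, hrR⟩ := exists_between hR
  have hr0 : 0 < r := by linarith
  have hsub : Metric.closedBall (0 : ℂ) r ⊆ Metric.ball 0 R := Metric.closedBall_subset_ball hrR
  obtain ⟨B₁, hB₁⟩ := ((isCompact_closedBall (0 : ℂ) r).image_of_continuousOn
    (hf.continuousOn.mono hsub)).isBounded.exists_norm_le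
  obtain ⟨B₂, hB₂⟩ := ((isCompact_closedBall (0 : ℂ) r).image_of_continuousOn
    (hg.continuousOn.mono hsub)).isBounded.exists_norm_le
  set B := max B₁ B₂
  have hfB : ∀ z ∈ Metric.closedBall 0 r, ‖f z‖ ≤ B := fun z hz =>
    (hB₁ _ ⟨z, hz, rfl⟩).trans (le_max_left _ _)
  have hgB : ∀ z ∈ Metric.closedBall 0 r, ‖g z‖ ≤ B := fun z hz =>
    (hB₂ _ ⟨z, hz, rfl⟩).trans (le_max_right _ _)
  have hexpB : ∀ (a : ℝ) (z : ℂ), |a| ≤ 1 → ‖z‖ ≤ B → ‖Complex.exp (a * z)‖ ≤ Real.exp B := by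
    intro a z ha hz
    refine (Complex.norm_exp_le_exp_norm _).trans (Real.exp_le_exp.mpr ?_)
    rw [norm_mul, Complex.norm_real, Real.norm_eq_abs]
    calc |a| * ‖z‖ ≤ 1 * B := by gcongr
      _ = B := one_mul B
  have hρ0 : 0 < r⁻¹ := inv_pos.mpr hr0
  have hρ1 : r⁻¹ < 1 := inv_lt_one_of_one_lt₀ hr1
  obtain ⟨K₀, σ, hρσ, hσ, hK₀⟩ := exists_linear_geometric_bound hρ0 hρ1
  have hσ0 : 0 < σ := hρ0.trans_le hρσ
  have h1σ : 0 < 1 - σ := by linarith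
  set C := Real.exp B
  set A := C * (C * C / (1 - r⁻¹)) * K₀ / (1 - σ)
  have htail : ∀ (N : ℕ) (F : ℕ → ℂ) (S : ℂ), (∀ i, ‖F i‖ ≤ A * σ ^ i) → HasSum F S →
      ‖S - ∑ i ∈ Finset.range N, F i‖ ≤ A / (1 - σ) * σ ^ N := by
    intro N F S hF hS
    rw [← hS.tsum_eq, ← hS.summable.sum_add_tsum_nat_add N, add_sub_cancel_left]
    refine (hasSum_of_geometric_bound (K := A * σ ^ N) hσ0.le hσ fun i => ?_).2.trans
      (le_of_eq (by ring))
    exact (hF _).trans (le_of_eq (by rw [pow_add]; ring))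
  refine ⟨fun N => (1 + (N : ℝ) ^ 2) * (A / (1 - σ) * σ ^ N), ?_, fun N s hs => ?_⟩
  · have h1 := tendsto_pow_const_mul_const_pow_of_abs_lt_one 0 (r := σ)
      (by rwa [abs_of_pos hσ0])
    have h2 := tendsto_pow_const_mul_const_pow_of_abs_lt_one 2 (r := σ)
      (by rwa [abs_of_pos hσ0])
    have h3 := (h1.add h2).const_mul (A / (1 - σ))
    simp only [add_zero, mul_zero] at h3
    refine h3.congr fun N => ?_
    ring
  have hs1 : |s| ≤ 1 := abs_le.mpr ⟨by linarith [hs.1], hs.2⟩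
  have hs1' : |-s| ≤ 1 := by rwa [abs_neg]
  have hdiff : ∀ (a : ℝ) (h : ℂ → ℂ), DifferentiableOn ℂ h (Metric.ball 0 R) →
      DifferentiableOn ℂ (fun z => Complex.exp (a * h z)) (Metric.ball 0 R) :=
    fun a h hh => (hh.const_mul _).cexp
  have ht := continuousOn_expSymbol hR hf hg s
  have ht1 := norm_expSymbol hre s
  set t := expSymbol f g s
  have hlt : ∀ z : ℂ, ‖z‖ = 1 → ‖z‖ < R := fun z hz => by rw [hz]; exact hR
  obtain ⟨X, hX, hXT, hXtr⟩ := exists_toeplitz_solution hρ0.le hρσ hσ (Real.exp_pos B).le hK₀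
    (w := taylorCoeff f) (q := taylorCoeff fun z => Complex.exp ((-s : ℝ) * f z))
    (b := taylorCoeff fun z => Complex.exp (s * g z))
    (d := taylorCoeff fun z => Complex.exp ((-s : ℝ) * g z)) (τ := symbolCoeff t)
    (u := fun n => s * ((n + 1) * taylorCoeff g (n + 1)))
    (fun n => norm_taylorCoeff_le hf hr0 hrR
      (fun z hz => (hfB z hz).trans (by have := Real.add_one_le_exp B; linarith)) n)
    (norm_taylorCoeff_le (hdiff _ f hf) hr0 hrR fun z hz => hexpB _ _ hs1' (hfB z hz))
    (norm_taylorCoeff_le (hdiff _ g hg) hr0 hrR fun z hz => hexpB _ _ hs1 (hgB z hz))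
    (norm_taylorCoeff_le (hdiff _ g hg) hr0 hrR fun z hz => hexpB _ _ hs1' (hgB z hz))
    (norm_symbolCoeff_le_one ht ht1)
    (fun n => by
      rw [sum_taylorCoeff_mul (H := fun _ => 1) (hdiff s g hg) (hdiff (-s) g hg) hR (fun z _ => by
        rw [← Complex.exp_add]; push_cast; simp)]
      rw [taylorCoeff, iteratedDeriv_const]
      split_ifs with hn
      · simp [hn]
      · simp)
    (fun k => by
      have h := hasSum_symbolCoeff_mul ht (summable_norm_taylorCoeff (hdiff (-s) f hf) hR)
        (fun z hz => hasSum_taylorCoeff (hdiff (-s) f hf) (hlt z hz)) k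
      convert! h using 1
      rw [symbolCoeff_congr (u := fun z => (fun y => Complex.exp (s * g y)) z⁻¹) fun z hz => by
        simp only [t, expSymbol]
        rw [← Complex.exp_add]; congr 1; push_cast; ring]
      rw [symbolCoeff_comp_inv (fun y => Complex.exp (s * g y)) k, symbolCoeff_powerSeries
        (summable_norm_taylorCoeff (hdiff s g hg) hR)
        (fun z hz => hasSum_taylorCoeff (hdiff s g hg) (hlt z hz))]
      simp only [Left.nonneg_neg_iff])
    (fun n => by
      have hdb : DifferentiableOn ℂ (deriv fun z => Complex.exp (s * g z)) (Metric.ball 0 R) :=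
        (hdiff s g hg).deriv Metric.isOpen_ball
      have h := sum_taylorCoeff_mul (H := fun z => s * deriv g z) hdb (hdiff (-s) g hg) hR
        (fun z hz => by
          have hgz : HasDerivAt g (deriv g z) z :=
            (hg.differentiableAt (Metric.isOpen_ball.mem_nhds hz)).hasDerivAt
          rw [((hgz.const_mul (s : ℂ)).cexp).deriv]
          rw [mul_right_comm, ← Complex.exp_add]
          push_cast
          simp) n
      simp only [taylorCoeff_deriv] at h
      rw [h, ← taylorCoeff_deriv, taylorCoeff, taylorCoeff, iteratedDeriv_const_mul_field]
      ring)
  have hrow := toeplitz_row_norm_le ht ht1 N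
  set T := toeplitzMatrix t N
  have hdet : ‖T.det‖ ≤ 1 := norm_det_le_one_of_row_norm_le T hrow
  have hadj : ∀ i j, ‖T.adjugate i j‖ ≤ 1 := norm_adjugate_le_one_of_row_norm_le T hrow
  let L : Matrix (Fin N) (Fin N) ℂ :=
    Matrix.of fun m i => if i ≤ m then taylorCoeff f (m - i : ℕ) else 0
  let G : Matrix (Fin N) (Fin N) ℂ := Matrix.of fun m n =>
    ∑' j : ℕ, taylorCoeff f (m + j + 1) * symbolCoeff t (-(j + n + 1))
  let X' : Matrix (Fin N) (Fin N) ℂ := Matrix.of fun i n => X i n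
  have hM : toeplitzMatrix (fun z => f z * t z) N = L * T + G := by
    ext m n
    have h := hasSum_symbolCoeff_mul ht (summable_norm_taylorCoeff hf hR)
        (fun z hz => hasSum_taylorCoeff hf (hlt z hz)) ((m : ℤ) - n)
    exact symbolCoeff_mul_split m n h
  have hE : ∀ m n, ‖(G - T * X') m n‖ ≤ A / (1 - σ) * σ ^ N := by
    intro m n
    have h := htail N _ _ (fun i => ?_) (hXT m n)
    · rw [Finset.sum_range] at h
      exact h
    · rw [norm_mul]
      calc _ ≤ 1 * (A * σ ^ i) := by
            gcongr
            · exact norm_symbolCoeff_le_one ht ht1 _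
            · exact hX i n
        _ = _ := one_mul _
  have hLT : (T.adjugate * (L * T)).trace = 0 := by
    rw [← mul_assoc, trace_mul_comm, ← mul_assoc, mul_adjugate, smul_mul, one_mul, trace_smul]
    have : L.trace = 0 := by
      simp [L, trace, taylorCoeff_zero, hf0]
    rw [this, smul_zero]
  have hTX : (T.adjugate * (T * X')).trace = T.det * ∑ i ∈ Finset.range N, X i i := by
    rw [← mul_assoc, adjugate_mul, smul_mul, one_mul, trace_smul, smul_eq_mul, Finset.sum_range]
    rfl
  have hc : s * szegoExponent f g =
      ∑' k, taylorCoeff f (k + 1) * (s * ((k + 1) * taylorCoeff g (k + 1))) := by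
    rw [szegoExponent, ← tsum_mul_left]
    exact tsum_congr fun k => by ring
  have hXs := htail N _ _ (fun i => hX i i) hXtr
  rw [← hc] at hXs
  have hsplit : (T.adjugate * (L * T + G)).trace - s * szegoExponent f g * T.det =
      -(T.det * (s * szegoExponent f g - ∑ i ∈ Finset.range N, X i i)) +
        (T.adjugate * (G - T * X')).trace := by
    rw [mul_add, trace_add, hLT, Matrix.mul_sub T.adjugate, trace_sub, hTX]
    ring
  rw [hM, hsplit]
  refine (norm_add_le _ _).trans ?_
  show _ ≤ (1 + (N : ℝ) ^ 2) * (A / (1 - σ) * σ ^ N)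
  rw [norm_neg, norm_mul, add_mul]
  have hAσ : 0 ≤ A / (1 - σ) * σ ^ N := (norm_nonneg _).trans hXs
  refine add_le_add (mul_le_mul hdet hXs (norm_nonneg _) zero_le_one) ?_
  calc ‖∑ i, ∑ j, T.adjugate i j * (G - T * X') j i‖
      ≤ ∑ _i : Fin N, ∑ _j : Fin N, A / (1 - σ) * σ ^ N := by
        refine norm_sum_le_of_le _ fun i _ => norm_sum_le_of_le _ fun j _ => ?_
        rw [norm_mul]
        calc _ ≤ 1 * (A / (1 - σ) * σ ^ N) := by
              gcongr
              · exact hadj _ _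
              · exact hE _ _
          _ = _ := one_mul _
    _ = _ := by
        simp only [Finset.sum_const, Finset.card_univ, Fintype.card_fin, nsmul_eq_mul]
        ring

lemma hasDerivAt_symbolCoeff_expSymbol {f g : ℂ → ℂ} {R : ℝ} (hR : 1 < R)
    (hf : DifferentiableOn ℂ f (Metric.ball 0 R)) (hg : DifferentiableOn ℂ g (Metric.ball 0 R))
    (hre : ∀ z, ‖z‖ = 1 → (f z + g z⁻¹).re = 0) (k : ℤ) (s : ℝ) :
    HasDerivAt (fun s : ℝ => symbolCoeff (expSymbol f g s) k)
      (symbolCoeff (fun z => f z * expSymbol f g s z) k +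
        symbolCoeff (fun z => g z⁻¹ * expSymbol f g s z) k) s := by
  have hfc := continuousOn_sphere_of_ball hR hf
  have hgc := (continuousOn_sphere_of_ball hR hg).comp_inv_sphere
  have htc := continuousOn_expSymbol hR hf hg
  obtain ⟨B, hB⟩ := ((isCompact_sphere (0 : ℂ) 1).image_of_continuousOn
    (hfc.add hgc)).isBounded.exists_norm_le
  rw [← symbolCoeff_add (t := fun z => f z * expSymbol f g s z)
    (u := fun z => g z⁻¹ * expSymbol f g s z) (hfc.mul (htc s)) (hgc.mul (htc s))]
  unfold symbolCoeff
  refine HasDerivAt.const_mul _ ?_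
  have hchar : Continuous fun θ : ℝ => Complex.exp (-(Complex.I * (k : ℂ) * (θ : ℂ))) := by
    fun_prop
  refine (intervalIntegral.hasDerivAt_integral_of_dominated_loc_of_deriv_le (bound := fun _ => B)
    (F' := fun (s : ℝ) (θ : ℝ) => (fun z => f z * expSymbol f g s z + g z⁻¹ * expSymbol f g s z)
      (Complex.exp (Complex.I * (θ : ℂ))) * Complex.exp (-(Complex.I * (k : ℂ) * (θ : ℂ))))
    (s := Set.univ) Filter.univ_mem
    (Filter.Eventually.of_forall fun x =>
      ((continuous_circleParam (htc x)).mul hchar).aestronglyMeasurable)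
    (((continuous_circleParam (htc s)).mul hchar).intervalIntegrable _ _)
    ((continuous_circleParam ((hfc.mul (htc s)).add
      (hgc.mul (htc s)))).mul hchar).aestronglyMeasurable
    (Filter.Eventually.of_forall fun θ _ x _ => ?_) intervalIntegrable_const
    (Filter.Eventually.of_forall fun θ _ x _ => ?_)).2
  · have hz := norm_circleParam θ
    beta_reduce
    rw [norm_mul, norm_circleChar, mul_one, ← add_mul, norm_mul,
      norm_expSymbol hre x _ hz, mul_one]
    exact hB _ ⟨_, mem_sphere_zero_iff_norm.mpr hz, rfl⟩
  · refine HasDerivAt.mul_const ?_ _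
    set z := Complex.exp (Complex.I * (θ : ℂ))
    have h := ((Complex.ofRealCLM.hasDerivAt (x := x)).mul_const (f z + g z⁻¹)).cexp
    refine h.congr_deriv ?_
    simp only [expSymbol, Complex.ofRealCLM_apply, Complex.ofReal_one]
    ring

lemma toeplitzMatrix_comp_inv (t : ℂ → ℂ) (N : ℕ) :
    toeplitzMatrix (fun z => t z⁻¹) N = (toeplitzMatrix t N).transpose := by
  ext m n
  simp only [toeplitzMatrix, Matrix.transpose_apply, Matrix.of_apply, symbolCoeff_comp_inv,
    neg_sub]

lemma expSymbol_comp_inv (f g : ℂ → ℂ) (s : ℝ) :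
    expSymbol g f s = fun z => expSymbol f g s z⁻¹ := by
  ext z
  simp only [expSymbol, inv_inv, add_comm]

lemma szegoExponent_comm (f g : ℂ → ℂ) : szegoExponent g f = szegoExponent f g :=
  tsum_congr fun k => by ring

/-- Derivative estimate in the direction of the co-analytic part of the exponent. -/
lemma exists_trace_adjugate_bound_inv {f g : ℂ → ℂ} {R : ℝ} (hR : 1 < R)
    (hf : DifferentiableOn ℂ f (Metric.ball 0 R)) (hg : DifferentiableOn ℂ g (Metric.ball 0 R))
    (hg0 : g 0 = 0) (hre : ∀ z, ‖z‖ = 1 → (f z + g z⁻¹).re = 0) :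
    ∃ ε : ℕ → ℝ, Tendsto ε atTop (nhds 0) ∧ ∀ (N : ℕ) (s : ℝ), s ∈ Set.Icc (0 : ℝ) 1 →
      ‖((toeplitzMatrix (expSymbol f g s) N).adjugate *
          toeplitzMatrix (fun z => g z⁻¹ * expSymbol f g s z) N).trace -
        s * szegoExponent f g * (toeplitzMatrix (expSymbol f g s) N).det‖ ≤ ε N := by
  obtain ⟨ε, hε, h⟩ := exists_trace_adjugate_bound hR hg hf hg0 fun z hz => by
    have := hre z⁻¹ (by rw [norm_inv, hz, inv_one])
    rwa [inv_inv, add_comm] at this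
  refine ⟨ε, hε, fun N s hs => ?_⟩
  have h := h N s hs
  have h2 : toeplitzMatrix (fun z => g z * expSymbol g f s z) N =
      (toeplitzMatrix (fun z => g z⁻¹ * expSymbol f g s z) N).transpose := by
    rw [← toeplitzMatrix_comp_inv, expSymbol_comp_inv f g]
    simp only [inv_inv]
  rw [h2, expSymbol_comp_inv f g, toeplitzMatrix_comp_inv, ← Matrix.adjugate_transpose,
    ← Matrix.transpose_mul, Matrix.trace_transpose, Matrix.trace_mul_comm, Matrix.det_transpose,
    szegoExponent_comm] at h
  exact h

lemma toeplitzDet_expSymbol_zero (f g : ℂ → ℂ) (N : ℕ) : toeplitzDet (expSymbol f g 0) N = 1 := by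
  have h : expSymbol f g 0 = fun _ => 1 := by
    ext z
    simp [expSymbol]
  rw [toeplitzDet, h]
  convert Matrix.det_one (R := ℂ) (n := Fin N)
  ext m n
  rw [Matrix.of_apply, symbolCoeff_one, Matrix.one_apply]
  exact if_congr (by rw [sub_eq_zero, Nat.cast_inj, Fin.val_inj]) rfl rfl

/-- Szegő's strong limit theorem for unimodular symbols with analytic logarithm of mean zero. -/
theorem tendsto_toeplitzDet_expSymbol {f g : ℂ → ℂ} {R : ℝ} (hR : 1 < R)
    (hf : DifferentiableOn ℂ f (Metric.ball 0 R)) (hg : DifferentiableOn ℂ g (Metric.ball 0 R))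
    (hf0 : f 0 = 0) (hg0 : g 0 = 0) (hre : ∀ z, ‖z‖ = 1 → (f z + g z⁻¹).re = 0) :
    Tendsto (fun N => toeplitzDet (expSymbol f g 1) N) atTop
      (nhds (Complex.exp (szegoExponent f g))) := by
  obtain ⟨ε₁, hε₁, h₁⟩ := exists_trace_adjugate_bound hR hf hg hf0 hre
  obtain ⟨ε₂, hε₂, h₂⟩ := exists_trace_adjugate_bound_inv hR hf hg hg0 hre
  set c := szegoExponent f g
  let D : ℕ → ℝ → ℂ := fun N s => toeplitzDet (expSymbol f g s) N
  let D' : ℕ → ℝ → ℂ := fun N s => ((toeplitzMatrix (expSymbol f g s) N).adjugate *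
    (toeplitzMatrix (fun z => f z * expSymbol f g s z) N +
      toeplitzMatrix (fun z => g z⁻¹ * expSymbol f g s z) N)).trace
  have hD : ∀ N s, HasDerivAt (D N) (D' N s) s := fun N s =>
    hasDerivAt_det (M := fun s => toeplitzMatrix (expSymbol f g s) N) fun i j =>
      hasDerivAt_symbolCoeff_expSymbol hR hf hg hre _ s
  have hbound : ∀ N s, s ∈ Set.Icc (0 : ℝ) 1 → ‖D' N s - 2 * s * c * D N s‖ ≤ ε₁ N + ε₂ N := by
    intro N s hs
    refine (le_of_eq ?_).trans (norm_add_le_of_le (h₁ N s hs) (h₂ N s hs))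
    simp only [D', D, Matrix.mul_add, Matrix.trace_add]
    congr 1
    simp only [toeplitzDet, toeplitzMatrix]
    ring
  have hexp : ∀ s : ℝ, HasDerivAt (fun s : ℝ => Complex.exp (-(c * (s : ℂ) ^ 2)))
      (Complex.exp (-(c * (s : ℂ) ^ 2)) * -(c * (2 * s))) s := by
    intro s
    have h := (((Complex.ofRealCLM.hasDerivAt (x := s)).pow 2).const_mul c).neg.cexp
    simpa using h
  have hmain : ∀ N, ‖D N 1 * Complex.exp (-c) - 1‖ ≤ (ε₁ N + ε₂ N) * Real.exp ‖c‖ := by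
    intro N
    have h := norm_image_sub_le_of_norm_deriv_le_segment_01' (C := (ε₁ N + ε₂ N) * Real.exp ‖c‖)
      (fun s _ => ((hD N s).mul (hexp s)).hasDerivWithinAt) fun s hs => by
        have hs' : s ∈ Set.Icc (0 : ℝ) 1 := ⟨hs.1, hs.2.le⟩
        rw [show D' N s * Complex.exp (-(c * (s : ℂ) ^ 2)) +
            D N s * (Complex.exp (-(c * (s : ℂ) ^ 2)) * -(c * (2 * s))) =
            (D' N s - 2 * s * c * D N s) * Complex.exp (-(c * (s : ℂ) ^ 2)) by ring, norm_mul]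
        refine mul_le_mul (hbound N s hs') ?_ (norm_nonneg _)
          ((norm_nonneg _).trans (hbound N s hs'))
        refine (Complex.norm_exp_le_exp_norm _).trans (Real.exp_le_exp.mpr ?_)
        rw [norm_neg, norm_mul, norm_pow, Complex.norm_real, Real.norm_eq_abs, abs_of_nonneg hs.1]
        exact mul_le_of_le_one_right (norm_nonneg _) (pow_le_one₀ hs.1 hs.2.le)
    simpa [D, toeplitzDet_expSymbol_zero] using h
  have hlim : Tendsto (fun N => D N 1 * Complex.exp (-c)) atTop (nhds 1) := by
    rw [tendsto_iff_norm_sub_tendsto_zero]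
    refine squeeze_zero (fun _ => norm_nonneg _) hmain ?_
    simpa using (hε₁.add hε₂).mul_const (Real.exp ‖c‖)
  have h := hlim.mul_const (Complex.exp c)
  simpa [mul_assoc, ← Complex.exp_add] using h

open ComplexConjugate in
lemma log_one_sub_conj {x : ℂ} (hx : ‖x‖ < 1) :
    Complex.log (1 - conj x) = conj (Complex.log (1 - x)) := by
  have h : 1 - x ∈ Complex.slitPlane := by
    have := Complex.mem_slitPlane_of_norm_lt_one (z := -x) (by rwa [norm_neg])
    rwa [← sub_eq_add_neg] at this
  rw [← Complex.log_conj _ (Complex.slitPlane_arg_ne_pi h), map_sub, map_one]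

/-- The finite sum `½ ∑ e_i log (1 - b_i x)` of logarithms. -/
noncomputable def halfLogSum {ι : Type*} [Fintype ι] (e : ι → ℤ) (b : ι → ℂ) (x : ℂ) : ℂ :=
  (1 / 2) * ∑ i, e i * Complex.log (1 - b i * x)

section HalfLogSum

variable {ι : Type*} [Fintype ι] (e : ι → ℤ) {b : ι → ℂ}

lemma halfLogSum_zero (b : ι → ℂ) : halfLogSum e b 0 = 0 := by
  simp [halfLogSum]

lemma exists_radius_mul_norm_lt_one (hb : ∀ i, ‖b i‖ < 1) :
    ∃ R : ℝ, 1 < R ∧ ∀ i, ∀ x ∈ Metric.ball (0 : ℂ) R, ‖b i * x‖ < 1 := by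
  have h : ∀ i, ∀ᶠ R in nhdsWithin (1 : ℝ) (Set.Ioi 1), ‖b i‖ * R < 1 := fun i => by
    have hc : Tendsto (fun R : ℝ => ‖b i‖ * R) (nhdsWithin 1 (Set.Ioi 1)) (nhds (‖b i‖ * 1)) :=
      (tendsto_id.mono_left nhdsWithin_le_nhds).const_mul _
    exact hc.eventually_lt_const (by rw [mul_one]; exact hb i)
  obtain ⟨R, hR, hR1⟩ := ((eventually_all.mpr h).and self_mem_nhdsWithin).exists
  refine ⟨R, hR1, fun i x hx => ?_⟩
  rw [norm_mul]
  rw [mem_ball_zero_iff] at hx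
  exact (mul_le_mul_of_nonneg_left hx.le (norm_nonneg _)).trans_lt (hR i)

lemma differentiableOn_halfLogSum {R : ℝ}
    (hR : ∀ i, ∀ x ∈ Metric.ball (0 : ℂ) R, ‖b i * x‖ < 1) :
    DifferentiableOn ℂ (halfLogSum e b) (Metric.ball 0 R) := by
  unfold halfLogSum
  refine (DifferentiableOn.fun_sum fun i _ => DifferentiableOn.const_mul
    (DifferentiableOn.clog (by fun_prop) fun x hx => ?_) _).const_mul _
  have := Complex.mem_slitPlane_of_norm_lt_one (z := -(b i * x)) (by rw [norm_neg]; exact hR i x hx)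
  rwa [← sub_eq_add_neg] at this

lemma taylorCoeff_halfLogSum (hb : ∀ i, ‖b i‖ < 1) (n : ℕ) :
    taylorCoeff (halfLogSum e b) n = -(1 / 2) * ∑ i, e i * (b i ^ n / n) := by
  obtain ⟨R, hR1, hR⟩ := exists_radius_mul_norm_lt_one hb
  have hsum : ∀ z : ℂ, ‖z‖ = 1 →
      HasSum (fun n : ℕ => -(1 / 2) * (∑ i, e i * (b i ^ n / n)) * z ^ n) (halfLogSum e b z) := by
    intro z hz
    have h : HasSum (fun n : ℕ => -(1 / 2) * ∑ i, e i * ((b i * z) ^ n / n))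
        (-(1 / 2) * ∑ i, e i * -Complex.log (1 - b i * z)) :=
      (hasSum_sum fun i _ => (Complex.hasSum_taylorSeries_neg_log
        (hR i z (by rw [mem_ball_zero_iff, hz]; exact hR1))).mul_left _).mul_left _
    convert! h using 1
    · ext n
      rw [mul_assoc, Finset.sum_mul]
      congr 1
      refine Finset.sum_congr rfl fun i _ => ?_
      rw [mul_pow]
      ring
    · simp only [halfLogSum, mul_neg, Finset.sum_neg_distrib, neg_mul, neg_neg]
  refine taylorCoeff_eq_of_hasSum (differentiableOn_halfLogSum e hR) hR1 ?_ hsum n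
  simpa using (hsum 1 norm_one).summable.norm

open ComplexConjugate in
lemma halfLogSum_conj (hb : ∀ i, ‖b i‖ < 1) {z : ℂ} (hz : ‖z‖ = 1) :
    halfLogSum (-e) (fun i => conj (b i)) z = -conj (halfLogSum e b z⁻¹) := by
  have hlog : ∀ i, Complex.log (1 - conj (b i) * z) = conj (Complex.log (1 - b i * z⁻¹)) := by
    intro i
    rw [← log_one_sub_conj (by rw [norm_mul, norm_inv, hz, inv_one, mul_one]; exact hb i),
      map_mul, Complex.inv_eq_conj hz, Complex.conj_conj]
  simp [halfLogSum, hlog, map_sum, map_ofNat]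

open ComplexConjugate in
lemma szegoExponent_halfLogSum (hb : ∀ i, ‖b i‖ < 1) :
    szegoExponent (halfLogSum (-e) fun i => conj (b i)) (halfLogSum e b) =
      (1 / 4) * ∑ i, ∑ l, e i * e l * Complex.log (1 - b i * conj (b l)) := by
  have hcb : ∀ i, ‖conj (b i)‖ < 1 := fun i => by rw [RCLike.norm_conj]; exact hb i
  have hmul : ∀ i l, ‖b i * conj (b l)‖ < 1 := fun i l => by
    rw [norm_mul]
    exact mul_lt_one_of_nonneg_of_lt_one_left (norm_nonneg _) (hb i) (hcb l).le
  have h : HasSum (fun k : ℕ => -(1 / 4) * ∑ i, ∑ l, e i * e l *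
      ((b i * conj (b l)) ^ (k + 1) / (k + 1)))
      (-(1 / 4) * ∑ i, ∑ l, e i * e l * -Complex.log (1 - b i * conj (b l))) :=
    (hasSum_sum fun i _ => hasSum_sum fun l _ =>
      (Complex.hasSum_taylorSeries_neg_log' (hmul i l)).mul_left _).mul_left _
  rw [szegoExponent]
  convert h.tsum_eq using 1
  · refine tsum_congr fun k => ?_
    have hk : (k + 1 : ℂ) ≠ 0 := by exact_mod_cast k.succ_ne_zero
    rw [taylorCoeff_halfLogSum _ hcb, taylorCoeff_halfLogSum _ hb]
    have h1 : ∑ i, ∑ l, (e i : ℂ) * e l * ((b i * conj (b l)) ^ (k + 1) / (k + 1)) =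
        (k + 1) * ((∑ i, e i * (b i ^ (k + 1) / (k + 1))) *
          ∑ l, e l * (conj (b l) ^ (k + 1) / (k + 1))) := by
      rw [Finset.sum_mul_sum, Finset.mul_sum]
      refine Finset.sum_congr rfl fun i _ => ?_
      rw [Finset.mul_sum]
      refine Finset.sum_congr rfl fun l _ => ?_
      rw [mul_pow]
      field_simp
    rw [h1]
    simp only [Pi.neg_apply, Int.cast_neg, neg_mul, Finset.sum_neg_distrib, Nat.cast_add,
      Nat.cast_one]
    ring
  · simp only [mul_neg, Finset.sum_neg_distrib, neg_mul, neg_neg]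

open ComplexConjugate in
/-- Strong Szegő asymptotics for products of square roots of unimodular Blaschke-type factors. -/
lemma tendsto_toeplitzDet_halfLogSum (hb : ∀ i, ‖b i‖ < 1) :
    Tendsto (fun N => toeplitzDet
        (expSymbol (halfLogSum (-e) fun i => conj (b i)) (halfLogSum e b) 1) N) atTop
      (nhds (Complex.exp
        ((1 / 4) * ∑ i, ∑ l, e i * e l * Complex.log (1 - b i * conj (b l))))) := by
  obtain ⟨R, hR1, hR⟩ := exists_radius_mul_norm_lt_one hb
  rw [← szegoExponent_halfLogSum e hb]
  refine tendsto_toeplitzDet_expSymbol hR1 (differentiableOn_halfLogSum _ fun i x hx => ?_)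
    (differentiableOn_halfLogSum e hR) (halfLogSum_zero _ _) (halfLogSum_zero _ _) fun z hz => ?_
  · have := hR i x hx
    rwa [norm_mul, RCLike.norm_conj, ← norm_mul]
  · rw [halfLogSum_conj e hb hz]
    simp

open ComplexConjugate in
lemma conj_sum_log_one_sub (hb : ∀ i, ‖b i‖ < 1) :
    conj (∑ i, ∑ l, (e i : ℂ) * e l * Complex.log (1 - b i * conj (b l))) =
      ∑ i, ∑ l, (e i : ℂ) * e l * Complex.log (1 - b i * conj (b l)) := by
  simp only [map_sum, map_mul, map_intCast]
  rw [Finset.sum_comm]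
  refine Finset.sum_congr rfl fun i _ => Finset.sum_congr rfl fun l _ => ?_
  rw [← log_one_sub_conj, map_mul, Complex.conj_conj, mul_comm (e l : ℂ),
    mul_comm (b i)]
  rw [norm_mul, RCLike.norm_conj]
  exact mul_lt_one_of_nonneg_of_lt_one_left (norm_nonneg _) (hb l) (hb i).le

open ComplexConjugate in
lemma exp_sum_log_one_sub (hb : ∀ i, ‖b i‖ < 1) :
    Complex.exp (∑ i, ∑ l, (e i : ℂ) * e l * Complex.log (1 - b i * conj (b l))) =
      ∏ i, ∏ l, (1 - b i * conj (b l)) ^ (e i * e l) := by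
  simp only [Complex.exp_sum]
  refine Finset.prod_congr rfl fun i _ => Finset.prod_congr rfl fun l _ => ?_
  rw [← Int.cast_mul, Complex.exp_int_mul, Complex.exp_log]
  rw [sub_ne_zero]
  intro h
  have h1 : ‖b i * conj (b l)‖ < 1 := by
    rw [norm_mul, RCLike.norm_conj]
    exact mul_lt_one_of_nonneg_of_lt_one_left (norm_nonneg _) (hb i) (hb l).le
  rw [← h, norm_one] at h1
  exact lt_irrefl _ h1

end HalfLogSum

/-- Theorem 3, `α = ω` part: value of the string order parameter in class AIII.
The limit of `|D_N[e^W]|` exists and equals `L^{1/4}`, where `L` is the stated positive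
real product over the zeros. -/
theorem aiii_string_order_parameter
    (Nz NZ : ℕ) (z : Fin Nz → ℂ) (Z : Fin NZ → ℂ)
    (hz : ∀ j, ‖z j‖ < 1) (hZ : ∀ k, 1 < ‖Z k‖) :
    ∃ r : ℝ, 0 < r ∧
      ((∏ j1 : Fin Nz, ∏ j2 : Fin Nz, (1 - z j1 * (starRingEnd ℂ) (z j2))) *
       (∏ k1 : Fin NZ, ∏ k2 : Fin NZ, (1 - (Z k1 * (starRingEnd ℂ) (Z k2))⁻¹))) /
      (∏ j : Fin Nz, ∏ k : Fin NZ, ((‖1 - z j / Z k‖ ^ 2 : ℝ) : ℂ)) = (r : ℂ) ∧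
      Tendsto
        (fun N : ℕ => ‖toeplitzDet (fun w => Complex.exp (aiiiW Nz NZ z Z w)) N‖)
        atTop (nhds (r ^ ((1 : ℝ) / 4))) := by
  let e : Fin Nz ⊕ Fin NZ → ℤ := Sum.elim (fun _ => 1) fun _ => -1
  let b : Fin Nz ⊕ Fin NZ → ℂ := Sum.elim z fun k => (starRingEnd ℂ) (Z k)⁻¹
  have hb : ∀ i, ‖b i‖ < 1 := by
    rintro (j | k)
    · exact hz j
    · simp only [b, Sum.elim_inr, RCLike.norm_conj, norm_inv]
      exact inv_lt_one_of_one_lt₀ (hZ k)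
  set S := ∑ i, ∑ l, (e i : ℂ) * e l * Complex.log (1 - b i * (starRingEnd ℂ) (b l)) with hS
  have hSre : ((S.re : ℝ) : ℂ) = S := Complex.conj_eq_iff_re.mp (conj_sum_log_one_sub e hb)
  refine ⟨Real.exp S.re, Real.exp_pos _, ?_, ?_⟩
  · rw [Complex.ofReal_exp, hSre, hS, exp_sum_log_one_sub e hb]
    simp only [Fintype.prod_sum_type, e, b, Sum.elim_inl, Sum.elim_inr, Complex.conj_conj,
      mul_one, mul_neg, zpow_one, zpow_neg, Finset.prod_mul_distrib,
      Finset.prod_inv_distrib]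
    rw [Finset.prod_comm (s := (Finset.univ : Finset (Fin NZ)))
      (t := (Finset.univ : Finset (Fin Nz)))]
    have hden : ∏ j, ∏ k, ((‖1 - z j / Z k‖ ^ 2 : ℝ) : ℂ) =
        (∏ j, ∏ k, (1 - z j * (Z k)⁻¹)) *
          ∏ j, ∏ k, (1 - (starRingEnd ℂ) (Z k)⁻¹ * (starRingEnd ℂ) (z j)) := by
      simp only [← Finset.prod_mul_distrib]
      refine Finset.prod_congr rfl fun j _ => Finset.prod_congr rfl fun k _ => ?_
      rw [Complex.ofReal_pow, ← Complex.mul_conj', div_eq_mul_inv, map_sub, map_one, map_mul,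
        mul_comm ((starRingEnd ℂ) (z j))]
    have hZZ : ∏ k1, ∏ k2, (1 - (Z k1 * (starRingEnd ℂ) (Z k2))⁻¹) =
        ∏ k1, ∏ k2, (1 - (starRingEnd ℂ) (Z k1)⁻¹ * (Z k2)⁻¹) := by
      rw [Finset.prod_comm]
      refine Finset.prod_congr rfl fun j _ => Finset.prod_congr rfl fun k _ => ?_
      rw [map_inv₀, mul_inv, mul_comm]
    rw [hden, hZZ, div_eq_mul_inv]
    simp only [mul_inv, inv_inv]
    ring
  · have hW : ∀ N, toeplitzDet (fun w => Complex.exp (aiiiW Nz NZ z Z w)) N =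
        toeplitzDet (expSymbol (halfLogSum (-e) fun i => (starRingEnd ℂ) (b i))
          (halfLogSum e b) 1) N := by
      intro N
      unfold toeplitzDet
      congr 2
      ext m n
      refine symbolCoeff_congr (fun w _ => ?_) _
      simp only [expSymbol, aiiiW, halfLogSum, Fintype.sum_sum_type, e, b, Sum.elim_inl,
        Sum.elim_inr, Pi.neg_apply, Complex.conj_conj, Finset.sum_sub_distrib, div_eq_mul_inv,
        mul_inv, map_inv₀, one_mul, Complex.ofReal_one, Int.cast_neg, Int.cast_one, neg_mul,
        Finset.sum_neg_distrib, mul_comm w]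
      congr 1
      ring
    simp only [hW]
    have h := (tendsto_toeplitzDet_halfLogSum e hb).norm
    rw [← hS, ← hSre, Complex.norm_exp] at h
    convert h using 2
    rw [← Real.exp_mul]
    congr 1
    rw [show (1 / 4 : ℂ) * (S.re : ℝ) = ((1 / 4 * S.re : ℝ) : ℂ) by push_cast; ring,
      Complex.ofReal_re]
    ring
end

section
/- Closed formula for the emptiness formation probability (Example for f(z) = z^{-2}(z−a)²(z−b)²). Let a, b ∈ ℝ with 0 < |a| < 1 < |b| and a·b ≠ 1, and let t be the symbol t(z) = ((b^{-1} − a)/2) · (z + 1)(z − 1) / ( (1 − a z)(z − b^{-1}) ) on the unit circle. Then for every integer N ≥ 1, D_N[t] = ( (b^{-1} − a)/2 )^N · ( (1−a)(1+b)/(2(b−a)) + (−1)^N (1+a)(1−b)/(2(a−b)) ). (The emptiness formation probability of the corresponding BDI chain is P(N) = |D_N[t]|.) -/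
open scoped BigOperators
open Filter

/-- A symbol given on the unit circle by an absolutely convergent Laurent series has the
coefficients of that series as its Fourier coefficients. -/
theorem symbolCoeff_eq_of_hasSum {t : ℂ → ℂ} {g : ℤ → ℂ} (hg : Summable fun k => ‖g k‖)
    (ht : ∀ w : ℂ, ‖w‖ = 1 → HasSum (fun k : ℤ => g k * w ^ k) (t w)) (k : ℤ) :
    symbolCoeff t k = g k := by
  have hpi : (Real.pi : ℂ) ≠ 0 := by exact_mod_cast Real.pi_ne_zero
  have hexp : ∀ (m : ℤ) (θ : ℝ), Complex.exp (Complex.I * θ) ^ m *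
      Complex.exp (-(Complex.I * k * θ)) = Complex.exp ((Complex.I * (m - k : ℤ)) * θ) := by
    intro m θ
    rw [← Complex.exp_int_mul, ← Complex.exp_add]
    congr 1
    push_cast
    ring
  have hnorm : ∀ (r : ℤ) (θ : ℝ), ‖Complex.exp ((Complex.I * r) * θ)‖ = 1 := by
    intro r θ
    have : (Complex.I * r) * θ = ((r * θ : ℝ) : ℂ) * Complex.I := by push_cast; ring
    rw [this, Complex.norm_exp_ofReal_mul_I]
  have integral_term : ∀ m : ℤ,
      ∫ θ in (0 : ℝ)..(2 * Real.pi), g m * Complex.exp ((Complex.I * (m - k : ℤ)) * θ)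
      = if m = k then 2 * Real.pi * g k else 0 := by
    intro m
    split_ifs with h
    · subst h
      simp
    · have hne : Complex.I * ((m - k : ℤ) : ℂ) ≠ 0 :=
        mul_ne_zero Complex.I_ne_zero (by exact_mod_cast sub_ne_zero.mpr h)
      rw [intervalIntegral.integral_const_mul, integral_exp_mul_complex hne]
      have : Complex.I * ((m - k : ℤ) : ℂ) * ((2 * Real.pi : ℝ) : ℂ)
          = ((m - k : ℤ) : ℂ) * (2 * Real.pi * Complex.I) := by push_cast; ring
      rw [this, Complex.exp_int_mul_two_pi_mul_I]
      simp
  have hsum : HasSum (fun m : ℤ => ∫ θ in (0 : ℝ)..(2 * Real.pi),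
        g m * Complex.exp ((Complex.I * (m - k : ℤ)) * θ))
      (∫ θ in (0 : ℝ)..(2 * Real.pi),
        t (Complex.exp (Complex.I * θ)) * Complex.exp (-(Complex.I * k * θ))) := by
    refine intervalIntegral.hasSum_integral_of_dominated_convergence (fun m _ => ‖g m‖)
      (fun m => (by fun_prop : Continuous fun θ : ℝ =>
        g m * Complex.exp ((Complex.I * (m - k : ℤ)) * θ)).aestronglyMeasurable)
      (fun m => Filter.Eventually.of_forall fun θ _ => by rw [norm_mul, hnorm, mul_one])
      (Filter.Eventually.of_forall fun _ _ => hg) intervalIntegrable_const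
      (Filter.Eventually.of_forall fun θ _ => ?_)
    have hw : ‖Complex.exp (Complex.I * θ)‖ = 1 := by
      rw [mul_comm, Complex.norm_exp_ofReal_mul_I]
    have h := (ht _ hw).mul_right (Complex.exp (-(Complex.I * k * θ)))
    simp only [mul_assoc (g _), hexp] at h
    exact h
  simp only [integral_term] at hsum
  rw [symbolCoeff, hsum.unique (hasSum_ite_eq k _)]
  field_simp

/-- The two-sided geometric sequence, `a ^ k` for `k ≥ 0` and `c ^ (-k)` for `k < 0`. -/
noncomputable def twoSidedGeom (a c : ℂ) : ℤ → ℂ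
  | Int.ofNat n => a ^ n
  | Int.negSucc n => c ^ (n + 1)

theorem summable_norm_twoSidedGeom {a c : ℂ} (ha : ‖a‖ < 1) (hc : ‖c‖ < 1) :
    Summable fun k => ‖twoSidedGeom a c k‖ := by
  refine Summable.of_nat_of_neg_add_one ?_ ?_
  · simpa [twoSidedGeom] using summable_geometric_of_lt_one (norm_nonneg a) ha
  · have h := (summable_nat_add_iff 1).mpr (summable_geometric_of_lt_one (norm_nonneg c) hc)
    refine h.congr fun n => ?_
    rw [← Int.negSucc_eq, twoSidedGeom, norm_pow]

theorem hasSum_twoSidedGeom {a c w : ℂ} (ha : ‖a‖ < 1) (hc : ‖c‖ < 1) (hw : ‖w‖ = 1) :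
    HasSum (fun k : ℤ => twoSidedGeom a c k * w ^ k)
      ((1 - a * w)⁻¹ + c * w⁻¹ * (1 - c * w⁻¹)⁻¹) := by
  refine HasSum.of_nat_of_neg_add_one ?_ ?_
  · have h := hasSum_geometric_of_norm_lt_one (ξ := a * w) (by rwa [norm_mul, hw, mul_one])
    simpa [twoSidedGeom, mul_pow] using h
  · have h := (hasSum_geometric_of_norm_lt_one (ξ := c * w⁻¹)
      (by rwa [norm_mul, norm_inv, hw, inv_one, mul_one])).mul_left (c * w⁻¹)
    have e : (fun n : ℕ => twoSidedGeom a c (-((n : ℤ) + 1)) * w ^ (-((n : ℤ) + 1))) =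
        fun n : ℕ => c * w⁻¹ * (c * w⁻¹) ^ n := by
      ext n
      rw [← Int.negSucc_eq, twoSidedGeom, zpow_negSucc, ← pow_succ', mul_pow, inv_pow]
    rwa [e]

theorem twoSidedGeom_sub_left (a c : ℂ) {k : ℤ} (hk : 1 ≤ k) :
    twoSidedGeom a c k - a * twoSidedGeom a c (k - 1) = 0 := by
  obtain ⟨n, rfl⟩ : ∃ n : ℕ, k = n + 1 := ⟨(k - 1).toNat, by omega⟩
  rw [add_sub_cancel_right]
  change a ^ (n + 1) - a * a ^ n = 0
  ring

theorem twoSidedGeom_sub_right (a c : ℂ) {k : ℤ} (hk : k ≤ -1) :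
    twoSidedGeom a c k - c * twoSidedGeom a c (k + 1) = 0 := by
  obtain ⟨n, rfl⟩ : ∃ n : ℕ, k = Int.negSucc n := ⟨(-k - 1).toNat, by omega⟩
  rcases n with _ | n
  · change c ^ (0 + 1) - c * a ^ 0 = 0
    ring
  · change c ^ (n + 1 + 1) - c * c ^ (n + 1) = 0
    ring

theorem twoSidedGeom_zero (a c : ℂ) : twoSidedGeom a c 0 = 1 := pow_zero a

theorem twoSidedGeom_one (a c : ℂ) : twoSidedGeom a c 1 = a := pow_one a

theorem twoSidedGeom_neg_one (a c : ℂ) : twoSidedGeom a c (-1) = c := pow_one c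

/-- The Fourier coefficients of `(z² - 1) / ((1 - a z) (z - c))`. -/
noncomputable def laurentCoeff (a c : ℂ) (k : ℤ) : ℂ :=
  (twoSidedGeom a c (k - 1) - twoSidedGeom a c (k + 1)) / (1 - a * c)

theorem one_sub_mul_ne_zero {x y : ℂ} (hx : ‖x‖ < 1) (hy : ‖y‖ ≤ 1) : 1 - x * y ≠ 0 := by
  intro h
  have h1 : ‖x * y‖ = 1 := by rw [← sub_eq_zero.mp h, norm_one]
  rw [norm_mul] at h1
  nlinarith [norm_nonneg x, norm_nonneg y]

theorem symbolCoeff_rational {a c : ℂ} (ha : ‖a‖ < 1) (hc : ‖c‖ < 1) (K : ℂ) (k : ℤ) :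
    symbolCoeff (fun w => K * ((w + 1) * (w - 1)) / ((1 - a * w) * (w - c))) k
      = K * laurentCoeff a c k := by
  have hac : 1 - a * c ≠ 0 := one_sub_mul_ne_zero ha hc.le
  have hs := summable_norm_twoSidedGeom ha hc
  refine symbolCoeff_eq_of_hasSum (g := fun k => K * laurentCoeff a c k) ?_ ?_ k
  · have h1 : Summable fun k : ℤ => ‖twoSidedGeom a c (k - 1)‖ :=
      hs.comp_injective (Equiv.subRight (1 : ℤ)).injective
    have h2 : Summable fun k : ℤ => ‖twoSidedGeom a c (k + 1)‖ :=
      hs.comp_injective (Equiv.addRight (1 : ℤ)).injective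
    exact (((h1.of_norm.sub h2.of_norm).div_const (1 - a * c)).mul_left K).norm
  · intro w hw
    have hw0 : w ≠ 0 := by
      rintro rfl
      simp at hw
    have h0 := hasSum_twoSidedGeom ha hc hw
    have h1 := ((Equiv.subRight (1 : ℤ)).hasSum_iff.mpr h0).mul_left w
    have h2 := ((Equiv.addRight (1 : ℤ)).hasSum_iff.mpr h0).mul_left w⁻¹
    have haw : 1 - a * w ≠ 0 := one_sub_mul_ne_zero ha hw.le
    have hcw : 1 - c * w⁻¹ ≠ 0 :=
      one_sub_mul_ne_zero hc (by rw [norm_inv, hw, inv_one])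
    have hwc : w - c ≠ 0 := by
      have : w - c = w * (1 - c * w⁻¹) := by field_simp
      rw [this]
      exact mul_ne_zero hw0 hcw
    have hcw' : 1 - c * w⁻¹ = (w - c) / w := by field_simp
    have hval : K * ((w + 1) * (w - 1)) / ((1 - a * w) * (w - c)) = K / (1 - a * c) *
        (w * ((1 - a * w)⁻¹ + c * w⁻¹ * (1 - c * w⁻¹)⁻¹) -
          w⁻¹ * ((1 - a * w)⁻¹ + c * w⁻¹ * (1 - c * w⁻¹)⁻¹)) := by
      have hwa : 1 - w * a ≠ 0 := by rwa [mul_comm]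
      rw [hcw']
      field_simp
      ring
    have hterm : (fun m : ℤ => K * laurentCoeff a c m * w ^ m) = fun m : ℤ => K / (1 - a * c) *
        (w * ((fun l => twoSidedGeom a c l * w ^ l) ∘ Equiv.subRight (1 : ℤ)) m -
          w⁻¹ * ((fun l => twoSidedGeom a c l * w ^ l) ∘ Equiv.addRight (1 : ℤ)) m) := by
      ext m
      simp only [Function.comp_apply, Equiv.subRight_apply, Equiv.coe_addRight, laurentCoeff,
        zpow_sub_one₀ hw0, zpow_add_one₀ hw0]
      field_simp
    rw [hval, hterm]
    exact (h1.sub h2).mul_left (K / (1 - a * c))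

/-- The tridiagonal matrix with subdiagonal `1`, superdiagonal `-1`, and diagonal
`(d, 0, …, 0)`. -/
def skewTridiagonal (d : ℂ) (N : ℕ) : Matrix (Fin N) (Fin N) ℂ :=
  Matrix.of fun i j =>
    if (i : ℕ) = j + 1 then 1 else if (j : ℕ) = i + 1 then -1
    else if (i : ℕ) = 0 ∧ (j : ℕ) = 0 then d else 0

theorem det_skewTridiagonal_add_two (d : ℂ) (n : ℕ) :
    (skewTridiagonal d (n + 2)).det = (skewTridiagonal d n).det := by
  have hsub : ((skewTridiagonal d (n + 2)).submatrix (Fin.last (n + 1)).succAbove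
      (Fin.last n).castSucc.succAbove).det = -(skewTridiagonal d n).det := by
    have hlast : (Fin.last n).castSucc.succAbove (Fin.last n) = Fin.last (n + 1) := by
      simp [Fin.succAbove]
    have hcast : ∀ j : Fin n, (Fin.last n).castSucc.succAbove j.castSucc
        = j.castSucc.castSucc := by
      intro j
      simp [Fin.succAbove, Fin.lt_def]
    rw [Matrix.det_succ_column _ (Fin.last n), Fin.sum_univ_castSucc, Finset.sum_eq_zero]
    · have hm : (((skewTridiagonal d (n + 2)).submatrix (Fin.last (n + 1)).succAbove
          (Fin.last n).castSucc.succAbove).submatrix (Fin.last n).succAbove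
          (Fin.last n).succAbove) = skewTridiagonal d n := by
        ext i j
        simp only [skewTridiagonal, Matrix.submatrix_apply, Matrix.of_apply, hcast,
          Fin.succAbove_last, Fin.val_castSucc]
      have hcorner : (skewTridiagonal d (n + 2)).submatrix (Fin.last (n + 1)).succAbove
          (Fin.last n).castSucc.succAbove (Fin.last n) (Fin.last n) = -1 := by
        simp only [skewTridiagonal, Matrix.submatrix_apply, Matrix.of_apply, hlast,
          Fin.succAbove_last, Fin.val_castSucc, Fin.val_last]
        grind
      rw [hm, hcorner]
      simp [← two_mul]
    · intro i _
      have := i.isLt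
      have h : (skewTridiagonal d (n + 2)).submatrix (Fin.last (n + 1)).succAbove
          (Fin.last n).castSucc.succAbove i.castSucc (Fin.last n) = 0 := by
        simp only [skewTridiagonal, Matrix.submatrix_apply, Matrix.of_apply, hlast,
          Fin.succAbove_last, Fin.val_castSucc, Fin.val_last]
        grind
      rw [h]
      ring
  rw [Matrix.det_succ_row _ (Fin.last (n + 1)), Fin.sum_univ_castSucc, Fin.sum_univ_castSucc,
    Finset.sum_eq_zero, hsub]
  · have h1 : skewTridiagonal d (n + 2) (Fin.last (n + 1)) (Fin.last n).castSucc = 1 := by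
      simp [skewTridiagonal]
    have h0 : skewTridiagonal d (n + 2) (Fin.last (n + 1)) (Fin.last (n + 1)) = 0 := by
      simp [skewTridiagonal]
    have hsign : (-1 : ℂ) ^ (n + 1 + n) = -1 := Odd.neg_one_pow ⟨n, by ring⟩
    rw [h1, h0, Fin.val_last, Fin.val_castSucc, Fin.val_last, hsign]
    ring
  · intro j _
    have := j.isLt
    have h : skewTridiagonal d (n + 2) (Fin.last (n + 1)) j.castSucc.castSucc = 0 := by
      simp only [skewTridiagonal, Matrix.of_apply, Fin.val_castSucc, Fin.val_last]
      grind
    rw [h]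
    ring

theorem det_skewTridiagonal (d : ℂ) (N : ℕ) :
    (skewTridiagonal d N).det = (1 + d) / 2 + (-1) ^ N * ((1 - d) / 2) := by
  induction N using Nat.twoStepInduction with
  | zero =>
    rw [Matrix.det_fin_zero]
    ring
  | one =>
    simp [skewTridiagonal]
    ring
  | more n ih _ =>
    rw [det_skewTridiagonal_add_two, ih]
    ring

theorem laurentCoeff_sub_left (a c : ℂ) (k : ℤ) :
    laurentCoeff a c k - a * laurentCoeff a c (k - 1) =
      ((twoSidedGeom a c (k - 1) - a * twoSidedGeom a c (k - 1 - 1)) -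
        (twoSidedGeom a c (k + 1) - a * twoSidedGeom a c (k + 1 - 1))) / (1 - a * c) := by
  simp only [laurentCoeff, sub_add_cancel, add_sub_cancel_right]
  ring

theorem laurentCoeff_sub_right (a c : ℂ) (k : ℤ) :
    laurentCoeff a c k - c * laurentCoeff a c (k + 1) =
      ((twoSidedGeom a c (k - 1) - c * twoSidedGeom a c (k - 1 + 1)) -
        (twoSidedGeom a c (k + 1) - c * twoSidedGeom a c (k + 1 + 1))) / (1 - a * c) := by
  simp only [laurentCoeff, sub_add_cancel, add_sub_cancel_right]
  ring

theorem twoSidedGeom_sub_sub (a c : ℂ) (k : ℤ) :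
    (twoSidedGeom a c k - a * twoSidedGeom a c (k - 1)) -
      c * (twoSidedGeom a c (k + 1) - a * twoSidedGeom a c k) =
      if k = 0 then 1 - a * c else 0 := by
  split_ifs with h
  · subst h
    rw [zero_add, zero_sub, twoSidedGeom_zero, twoSidedGeom_one, twoSidedGeom_neg_one]
    ring
  · rcases lt_or_gt_of_ne h with h | h
    · have h1 := twoSidedGeom_sub_right a c (k := k) (by omega)
      have h2 := twoSidedGeom_sub_right a c (k := k - 1) (by omega)
      rw [sub_add_cancel] at h2
      linear_combination h1 - a * h2
    · have h1 := twoSidedGeom_sub_left a c (k := k) (by omega)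
      have h2 := twoSidedGeom_sub_left a c (k := k + 1) (by omega)
      rw [add_sub_cancel_right] at h2
      linear_combination h1 - c * h2

theorem laurentCoeff_zero (a c : ℂ) : laurentCoeff a c 0 = (c - a) / (1 - a * c) := by
  rw [laurentCoeff, zero_sub, zero_add, twoSidedGeom_one, twoSidedGeom_neg_one]

theorem laurentCoeff_sub_left_of_pos {a c : ℂ} (hac : 1 - a * c ≠ 0) {k : ℤ} (hk : 1 ≤ k) :
    laurentCoeff a c k - a * laurentCoeff a c (k - 1) = if k = 1 then 1 else 0 := by
  rw [laurentCoeff_sub_left, twoSidedGeom_sub_left a c (k := k + 1) (by omega)]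
  split_ifs with h
  · subst h
    rw [sub_self, zero_sub, twoSidedGeom_zero, twoSidedGeom_neg_one, sub_zero, div_self hac]
  · rw [twoSidedGeom_sub_left a c (k := k - 1) (by omega), sub_zero, zero_div]

theorem laurentCoeff_sub_right_of_neg {a c : ℂ} (hac : 1 - a * c ≠ 0) {k : ℤ} (hk : k ≤ -1) :
    laurentCoeff a c k - c * laurentCoeff a c (k + 1) = if k = -1 then -1 else 0 := by
  rw [laurentCoeff_sub_right, twoSidedGeom_sub_right a c (k := k - 1) (by omega)]
  split_ifs with h
  · subst h
    rw [neg_add_cancel, zero_add, twoSidedGeom_zero, twoSidedGeom_one, zero_sub, neg_div,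
      mul_comm c a, div_self hac]
  · rw [twoSidedGeom_sub_right a c (k := k + 1) (by omega), sub_zero, zero_div]

theorem laurentCoeff_sub_sub {a c : ℂ} (hac : 1 - a * c ≠ 0) (k : ℤ) :
    (laurentCoeff a c k - a * laurentCoeff a c (k - 1)) -
      c * (laurentCoeff a c (k + 1) - a * laurentCoeff a c k) =
      if k = 1 then 1 else if k = -1 then -1 else 0 := by
  have h1 := twoSidedGeom_sub_sub a c (k - 1)
  have h2 := twoSidedGeom_sub_sub a c (k + 1)
  have h3 := laurentCoeff_sub_left a c k
  have h4 := laurentCoeff_sub_left a c (k + 1)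
  simp only [sub_add_cancel, add_sub_cancel_right] at h1 h2 h3 h4
  have h : (laurentCoeff a c k - a * laurentCoeff a c (k - 1)) -
      c * (laurentCoeff a c (k + 1) - a * laurentCoeff a c k) =
      ((if k - 1 = 0 then 1 - a * c else 0) - (if k + 1 = 0 then 1 - a * c else 0))
        / (1 - a * c) := by
    rw [h3, h4, ← h1, ← h2]
    ring
  rw [h]
  rcases eq_or_ne k 1 with rfl | hk1
  · simp [hac]
  · rcases eq_or_ne k (-1) with rfl | hk2
    · rw [if_neg (by norm_num), if_pos (by norm_num), if_neg (by norm_num), if_pos rfl, zero_sub,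
        neg_div, div_self hac]
    · rw [if_neg (by omega), if_neg (by omega), if_neg hk1, if_neg hk2, sub_zero, zero_div]

theorem det_laurentCoeff {a c : ℂ} (hac : 1 - a * c ≠ 0) (n : ℕ) :
    (Matrix.of fun i j : Fin (n + 1) => laurentCoeff a c ((i : ℤ) - (j : ℤ))).det =
      (skewTridiagonal ((c - a) / (1 - a * c)) (n + 1)).det := by
  let R : Matrix (Fin (n + 1)) (Fin (n + 1)) ℂ := Matrix.of fun i j =>
    if i = 0 then laurentCoeff a c (-(j : ℤ))
    else laurentCoeff a c ((i : ℤ) - j) - a * laurentCoeff a c ((i : ℤ) - j - 1)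
  trans R.det
  · refine Matrix.det_eq_of_forall_row_eq_smul_add_pred (fun _ => a) (fun j => by simp [R]) ?_
    intro i j
    have h : ((i : ℕ) : ℤ) + 1 - (j : ℕ) - 1 = (i : ℕ) - (j : ℕ) := by ring
    simp [R, h]
  · refine Matrix.det_eq_of_forall_col_eq_smul_add_pred (fun _ => c) ?_ ?_
    · intro i
      refine Fin.cases ?_ (fun i => ?_) i
      · simp [R, skewTridiagonal, laurentCoeff_zero]
      · have h := laurentCoeff_sub_left_of_pos hac (k := (i : ℤ) + 1) (by omega)
        simpa [R, skewTridiagonal] using h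
    · intro i j
      refine Fin.cases ?_ (fun i => ?_) i
      · have h := laurentCoeff_sub_right_of_neg hac (k := -((j : ℤ) + 1)) (by omega)
        rw [show -((j : ℤ) + 1) + 1 = -(j : ℤ) by ring] at h
        have h' : (-((j : ℤ) + 1) = -1) ↔ (j : ℕ) = 0 := by omega
        rw [if_congr h' rfl rfl] at h
        simpa [R, skewTridiagonal, sub_eq_iff_eq_add] using h
      · have h := laurentCoeff_sub_sub hac ((i : ℤ) - j)
        have h1 : ((i : ℤ) - j = 1) ↔ (i : ℕ) = j + 1 := by omega
        have h2 : ((i : ℤ) - j = -1) ↔ (j : ℕ) = i + 1 := by omega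
        rw [if_congr h1 rfl (if_congr h2 rfl rfl)] at h
        have e1 : ((i : ℕ) : ℤ) + 1 - (j : ℕ) - 1 = (i : ℕ) - (j : ℕ) := by ring
        have e2 : ((i : ℕ) : ℤ) + 1 - (j : ℕ) = (i : ℕ) - (j : ℕ) + 1 := by ring
        simpa [R, skewTridiagonal, sub_eq_iff_eq_add, e1, e2] using h

/-- Closed formula for the emptiness formation probability for the BDI chain with
`f(z) = z⁻²(z−a)²(z−b)²`, `0 < |a| < 1 < |b|`, `ab ≠ 1`. -/
theorem emptiness_formation_probability
    (a b : ℝ) (ha0 : 0 < |a|) (ha1 : |a| < 1) (hb : 1 < |b|) (hab : a * b ≠ 1)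
    (N : ℕ) (hN : 1 ≤ N) :
    toeplitzDet
      (fun w => (((b : ℂ)⁻¹ - a) / 2) * ((w + 1) * (w - 1)) /
        ((1 - (a : ℂ) * w) * (w - (b : ℂ)⁻¹))) N
      = (((b : ℂ)⁻¹ - a) / 2) ^ N *
        ((1 - (a : ℂ)) * (1 + (b : ℂ)) / (2 * ((b : ℂ) - a)) +
          (-1 : ℂ) ^ N * ((1 + (a : ℂ)) * (1 - (b : ℂ)) / (2 * ((a : ℂ) - b)))) := by
  have hb0 : (b : ℂ) ≠ 0 := by
    rintro h
    rw [Complex.ofReal_eq_zero] at h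
    simp [h] at hb
    linarith
  have ha : ‖(a : ℂ)‖ < 1 := by rwa [Complex.norm_real, Real.norm_eq_abs]
  have hc : ‖(b : ℂ)⁻¹‖ < 1 := by
    rw [norm_inv, Complex.norm_real, Real.norm_eq_abs]
    exact inv_lt_one_of_one_lt₀ hb
  have hac : 1 - (a : ℂ) * (b : ℂ)⁻¹ ≠ 0 := one_sub_mul_ne_zero ha hc.le
  have hba : (b : ℂ) - a ≠ 0 := by
    intro h
    rw [sub_eq_zero, Complex.ofReal_inj] at h
    rw [h] at hb
    linarith
  obtain ⟨n, rfl⟩ : ∃ n, N = n + 1 := ⟨N - 1, by omega⟩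
  have hd : ((b : ℂ)⁻¹ - a) / (1 - a * (b : ℂ)⁻¹) = (1 - a * b) / (b - a) := by
    field_simp
  have hsmul : (Matrix.of fun i j : Fin (n + 1) => (((b : ℂ)⁻¹ - a) / 2) *
      laurentCoeff a (b : ℂ)⁻¹ ((i : ℤ) - (j : ℤ))) = (((b : ℂ)⁻¹ - a) / 2) •
      Matrix.of fun i j : Fin (n + 1) => laurentCoeff a (b : ℂ)⁻¹ ((i : ℤ) - (j : ℤ)) := rfl
  simp only [toeplitzDet, symbolCoeff_rational ha hc]
  rw [hsmul, Matrix.det_smul, Fintype.card_fin, det_laurentCoeff hac, det_skewTridiagonal, hd]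
  congr 2
  · field_simp
    ring
  · congr 1
    rw [← neg_sub (b : ℂ) a]
    field_simp
    ring
end
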